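/- arXiv:1005.4548 — 5 statements merged into one kernel-verified Lean document; each statement's English description precedes it below -/
import Mathlib

section
/- Let q = p^n, let ω be the Teichmüller character of F_q^× valued in ℚ_p(ξ) (where ξ is a primitive (q-1)-th root of unity), and let g(j) = τ(ω^{-j}) be the Gauss sum. Then for 1 ≤ j < q-1, the p-adic valuation of g(j) equals wt_p(j)/(p-1), where wt_p(j) is the sum of the base-p digits of j. -/
/-!
Call a multiplicative character `ω` of `F = 𝔽_q` Teichmüller when it is additive modulo the maximal
ideal of the valuation `v`, so that it reduces to an embedding of `F` into the residue field. Put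
`g j = ∑ x, ω x ^ (-j) * ζ ^ Tr x` and `π = ζ - 1`. Expanding `ζ ^ k = 1 + k * π + O(π ^ 2)` gives
`g 1 ≡ π * ∑ x, ω x⁻¹ * Tr x` modulo `π ^ 2`, and the last sum reduces to
`∑ x, x⁻¹ * ∑ i, x ^ p ^ i = -1`; hence `v (g 1) = v π`. Frobenius invariance of the trace gives
`g (p * j) = g j`, and integrality of Jacobi sums gives `v (g a) * v (g b) ≤ v (g (a + b))`, so
building `j` digit by digit yields `v π ^ wt j ≤ v (g j)`. The same bound for `q - 1 - j`, whose
digits are complementary, together with `v (g j) * v (g (q - 1 - j)) = v q`, forces equality.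
-/

section Digits

theorem sum_digits_eq_mod_add_sum_digits_div {b : ℕ} (hb : 1 < b) (m : ℕ) :
    (Nat.digits b m).sum = m % b + (Nat.digits b (m / b)).sum := by
  rcases Nat.eq_zero_or_pos m with rfl | hm
  · simp
  · rw [Nat.digits_def' hb hm, List.sum_cons]

theorem pow_sub_one_sub_eq_mod_add_mul_div {b : ℕ} (hb : 0 < b) (n : ℕ) {j : ℕ}
    (hj : j < b ^ (n + 1)) :
    b ^ (n + 1) - 1 - j = (b - 1 - j % b) + b * (b ^ n - 1 - j / b) := by
  have hdiv : j / b < b ^ n := Nat.div_lt_of_lt_mul (by rwa [← pow_succ'])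
  have hmod : j % b < b := Nat.mod_lt j hb
  have hsplit : j % b + b * (j / b) = j := Nat.mod_add_div j b
  have hhigh : b * (b ^ n - 1 - j / b) + b * (j / b) + b = b ^ (n + 1) := by
    rw [pow_succ', ← mul_add, ← mul_add_one]
    congr 1
    lia
  lia

theorem sum_digits_add_sum_digits_pow_sub_one_sub {b : ℕ} (hb : 1 < b) (n : ℕ) {j : ℕ}
    (hj : j < b ^ n) :
    (Nat.digits b j).sum + (Nat.digits b (b ^ n - 1 - j)).sum = n * (b - 1) := by
  induction n generalizing j with
  | zero => simp_all
  | succ n ih =>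
    have hb0 : 0 < b := by lia
    have hdiv : j / b < b ^ n := Nat.div_lt_of_lt_mul (by rwa [← pow_succ'])
    have hmod : j % b < b := Nat.mod_lt j hb0
    have hlow : b - 1 - j % b < b := by lia
    have hcompl := pow_sub_one_sub_eq_mod_add_mul_div hb0 n hj
    have hcompl_mod : (b ^ (n + 1) - 1 - j) % b = b - 1 - j % b := by
      rw [hcompl, Nat.add_mul_mod_self_left, Nat.mod_eq_of_lt hlow]
    have hcompl_div : (b ^ (n + 1) - 1 - j) / b = b ^ n - 1 - j / b := by
      rw [hcompl, Nat.add_mul_div_left _ _ hb0, Nat.div_eq_of_lt hlow, zero_add]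
    rw [sum_digits_eq_mod_add_sum_digits_div hb j,
      sum_digits_eq_mod_add_sum_digits_div hb (b ^ (n + 1) - 1 - j), hcompl_mod, hcompl_div,
      add_one_mul, ← ih hdiv]
    lia

theorem pow_sum_digits_le_of_mul_le {M : Type*} [CommMonoid M] [Preorder M] [IsOrderedMonoid M]
    {f : ℕ → M} {b N : ℕ} (hb : 1 < b) (hzero : f 0 = 1) (hbase : ∀ m, f (b * m) = f m)
    (hadd : ∀ i k, i + k < N → f i * f k ≤ f (i + k)) {j : ℕ} (hj : j < N) :
    f 1 ^ (Nat.digits b j).sum ≤ f j := by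
  have hpow (r : ℕ) (hr : r < N) : f 1 ^ r ≤ f r := by
    induction r with
    | zero => simp [hzero]
    | succ r ih =>
      rw [pow_succ]
      exact (mul_le_mul_left (ih (by lia)) _).trans (hadd r 1 hr)
  induction j using Nat.strong_induction_on with
  | _ j ih =>
    rcases Nat.eq_zero_or_pos j with rfl | hj0
    · simp [hzero]
    · have hdiv : j / b < j := Nat.div_lt_self hj0 hb
      have hmod : j % b ≤ j := Nat.mod_le j b
      calc f 1 ^ (Nat.digits b j).sum
          = f 1 ^ (j % b) * f 1 ^ (Nat.digits b (j / b)).sum := by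
            rw [sum_digits_eq_mod_add_sum_digits_div hb j, pow_add]
        _ ≤ f (j % b) * f (b * (j / b)) := by
            rw [hbase]
            exact mul_le_mul' (hpow _ (by lia)) (ih _ hdiv (by lia))
        _ ≤ f (j % b + b * (j / b)) := hadd _ _ (by rwa [Nat.mod_add_div])
        _ = f j := by rw [Nat.mod_add_div]

end Digits

section RootsOfUnity

variable {R Γ : Type*} [CommRing R] [LinearOrderedCommGroupWithZero Γ] {v : Valuation R Γ}

theorem valuation_natCast_le_one (v : Valuation R Γ) (n : ℕ) : v n ≤ 1 :=
  natCast_mem v.integer n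

theorem valuation_eq_one_of_pow_eq_one {x : R} {n : ℕ} (hn : n ≠ 0) (hx : x ^ n = 1) :
    v x = 1 := by
  rw [← pow_eq_one_iff_of_nonneg zero_le hn, ← map_pow, hx, map_one]

theorem valuation_pow_sub_one_le {x : R} (hx : v x ≤ 1) (n : ℕ) :
    v (x ^ n - 1) ≤ v (x - 1) := by
  rw [← geom_sum_mul, map_mul]
  refine mul_le_of_le_one_left' (v.map_sum_le fun i _ ↦ ?_)
  rw [map_pow]
  exact pow_le_one' hx i

theorem valuation_pow_sub_one_sub_mul_le {x : R} (hx : v (x - 1) ≤ 1) (k : ℕ) :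
    v (x ^ k - 1 - k * (x - 1)) ≤ v (x - 1) ^ 2 := by
  have hx1 : v x ≤ 1 := by simpa using v.map_add_le hx v.map_one.le
  induction k with
  | zero => simp
  | succ k ih =>
    have hstep : x ^ (k + 1) - 1 - ((k + 1 : ℕ) : R) * (x - 1) =
        x * (x ^ k - 1 - k * (x - 1)) + k * (x - 1) ^ 2 := by push_cast; ring
    rw [hstep]
    refine v.map_add_le ?_ ?_
    · rw [map_mul]; exact mul_le_of_le_one_of_le hx1 ih
    · rw [map_mul, map_pow]; exact mul_le_of_le_one_left' (valuation_natCast_le_one v k)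

theorem valuation_primitiveRoot_sub_one_pow [IsDomain R] (v : Valuation R Γ) {p : ℕ}
    [Fact p.Prime] {ζ : R} (hζ : IsPrimitiveRoot ζ p) : v (ζ - 1) ^ (p - 1) = v (p : R) := by
  have hp : p.Prime := Fact.out
  have hint (i : ℕ) : v (ζ ^ i) ≤ 1 :=
    (valuation_eq_one_of_pow_eq_one hp.ne_zero
      (by rw [pow_right_comm, hζ.pow_eq_one, one_pow])).le
  have hconj (i : ℕ) (hi : i + 1 < p) : v (1 - ζ ^ (i + 1)) = v (ζ - 1) := by
    rw [v.map_sub_swap]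
    refine (valuation_pow_sub_one_le (by simpa using hint 1) _).antisymm ?_
    have hprim : IsPrimitiveRoot (ζ ^ (i + 1)) p :=
      hζ.pow_of_coprime _ (Nat.coprime_of_lt_prime i.succ_ne_zero hi hp).symm
    have : NeZero p := ⟨hp.ne_zero⟩
    obtain ⟨m, -, hm⟩ := hprim.eq_pow_of_pow_eq_one hζ.pow_eq_one
    simpa only [hm] using valuation_pow_sub_one_le (hint (i + 1)) m
  obtain ⟨m, rfl⟩ := Nat.exists_eq_add_of_le' hp.one_le
  rw [Nat.cast_add_one, ← hζ.prod_one_sub_pow_eq_order, map_prod,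
    Finset.prod_congr rfl fun i hi ↦ hconj i (by simpa using hi)]
  simp

end RootsOfUnity

section MulChars

variable {M R Γ : Type*} [CommMonoid M] [Finite M] [CommRing R] [LinearOrderedCommGroupWithZero Γ]

theorem valuation_mulChar_apply_of_isUnit (v : Valuation R Γ) (χ : MulChar M R) {x : M}
    (hx : IsUnit x) : v (χ x) = 1 := by
  obtain ⟨u, rfl⟩ := hx
  refine valuation_eq_one_of_pow_eq_one (Nat.card_pos (α := Mˣ)).ne' ?_
  rw [← map_pow, ← Units.val_pow_eq_pow_val, pow_card_eq_one', Units.val_one, map_one]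

theorem valuation_mulChar_apply_le_one (v : Valuation R Γ) (χ : MulChar M R) (x : M) :
    v (χ x) ≤ 1 := by
  by_cases hx : IsUnit x
  · exact (valuation_mulChar_apply_of_isUnit v χ hx).le
  · simp [χ.map_nonunit hx]

end MulChars

section GaussSums

variable {F R Γ : Type*} [Field F] [Fintype F] [CommRing R] [LinearOrderedCommGroupWithZero Γ]

theorem gaussSum_pow_of_frobenius_invariant {p : ℕ} [Fact p.Prime] [CharP F p] (χ : MulChar F R)
    {ψ : AddChar F R} (hψ : ∀ x, ψ (x ^ p) = ψ x) : gaussSum (χ ^ p) ψ = gaussSum χ ψ :=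
  Fintype.sum_bijective (frobenius F p) (bijective_frobenius F p) _ _ fun x ↦ by
    rw [frobenius_def, hψ, MulChar.pow_apply' _ (Fact.out : p.Prime).ne_zero, map_pow]

variable [IsDomain R]

theorem valuation_gaussSum_mul_le (v : Valuation R Γ) {χ φ : MulChar F R} (h : χ * φ ≠ 1)
    (ψ : AddChar F R) :
    v (gaussSum χ ψ) * v (gaussSum φ ψ) ≤ v (gaussSum (χ * φ) ψ) := by
  have hjacobi : v (jacobiSum χ φ) ≤ 1 := v.map_sum_le fun x _ ↦ by
    rw [map_mul]
    exact mul_le_one' (valuation_mulChar_apply_le_one v χ _) (valuation_mulChar_apply_le_one v φ _)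
  rw [← map_mul, ← jacobiSum_mul_nontrivial h, map_mul]
  exact mul_le_of_le_one_right' hjacobi

theorem valuation_gaussSum_mul_gaussSum_inv (v : Valuation R Γ) {χ : MulChar F R} (hχ : χ ≠ 1)
    {ψ : AddChar F R} (hψ : ψ.IsPrimitive) :
    v (gaussSum χ ψ) * v (gaussSum χ⁻¹ ψ) = v (Fintype.card F : R) := by
  rw [← gaussSum_mul_gaussSum_eq_card hχ hψ, ← mul_gaussSum_inv_eq_gaussSum χ⁻¹ ψ, map_mul, map_mul,
    valuation_mulChar_apply_of_isUnit v _ isUnit_one.neg, one_mul]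

end GaussSums

section TraceCharacter

variable {p : ℕ} [Fact p.Prime] {F R Γ : Type*} [Field F] [Algebra (ZMod p) F] [CommRing R]
  [LinearOrderedCommGroupWithZero Γ] {ζ : R}

/-- The additive character `x ↦ ζ ^ Tr(x)` of an extension `F` of the prime field `ZMod p`,
called `μ` in the definition of the Gauss sums. -/
noncomputable def traceAddChar (F : Type*) [Field F] [Algebra (ZMod p) F] (hζ : ζ ^ p = 1) :
    AddChar F R :=
  (AddChar.zmodChar p hζ).compAddMonoidHom (Algebra.trace (ZMod p) F).toAddMonoidHom

theorem traceAddChar_apply (hζ : ζ ^ p = 1) (x : F) :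
    traceAddChar F hζ x = ζ ^ (Algebra.trace (ZMod p) F x).val := rfl

theorem traceAddChar_pow_char [Finite F] (hζ : ζ ^ p = 1) (x : F) :
    traceAddChar F hζ (x ^ p) = traceAddChar F hζ x := by
  rw [traceAddChar_apply, traceAddChar_apply,
    ← Algebra.trace_eq_of_algEquiv (FiniteField.frobeniusAlgEquivOfAlgebraic (ZMod p) F) x]
  simp [ZMod.card]

theorem traceAddChar_ne_one [Finite F] (hζ : IsPrimitiveRoot ζ p) :
    traceAddChar F hζ.pow_eq_one ≠ 1 := by
  intro h
  obtain ⟨x, hx⟩ := Algebra.trace_surjective (ZMod p) F 1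
  refine hζ.ne_one (Fact.out : p.Prime).one_lt ?_
  simpa [traceAddChar_apply, hx, ZMod.val_one'' (Fact.out : p.Prime).ne_one]
    using DFunLike.congr_fun h x

variable [Fintype F]

theorem sum_inv_mul_trace (hF : 2 < Fintype.card F) :
    ∑ x : F, x⁻¹ * algebraMap (ZMod p) F (Algebra.trace (ZMod p) F x) = -1 := by
  classical
  have hp : 1 < p := (Fact.out : p.Prime).one_lt
  have hcard : Fintype.card F = p ^ Module.finrank (ZMod p) F := by
    simpa [ZMod.card] using Module.card_eq_pow_finrank (K := ZMod p) (V := F)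
  have hlinear : ∑ x : F, x⁻¹ * x = -1 := by
    have hone : ∀ x ∈ Finset.univ.erase (0 : F), x⁻¹ * x = 1 := fun x hx ↦
      inv_mul_cancel₀ (Finset.ne_of_mem_erase hx)
    rw [← Finset.add_sum_erase _ _ (Finset.mem_univ 0), Finset.sum_congr rfl hone]
    simp [Finset.card_erase_of_mem, Nat.cast_sub Fintype.card_pos]
  have hfrob (i : ℕ) (hi : i < Module.finrank (ZMod p) F) (hi0 : i ≠ 0) :
      ∑ x : F, x⁻¹ * x ^ p ^ i = 0 := by
    have hlt : p ^ i < Fintype.card F := hcard ▸ Nat.pow_lt_pow_right hp hi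
    have hgt : 1 < p ^ i := Nat.one_lt_pow hi0 hp
    rw [← FiniteField.sum_pow_lt_card_sub_one (K := F) (p ^ i - 1) (by lia)]
    refine Finset.sum_congr rfl fun x _ ↦ ?_
    rcases eq_or_ne x 0 with rfl | hx
    · simp [Nat.sub_ne_zero_of_lt hgt]
    · rw [← mul_pow_sub_one (by lia) x, inv_mul_cancel_left₀ hx]
  simp_rw [FiniteField.algebraMap_trace_eq_sum_pow, Nat.card_zmod, Finset.mul_sum]
  rw [Finset.sum_comm, Finset.sum_eq_single_of_mem 0 (by simp [Module.finrank_pos])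
    fun i hi hi0 ↦ hfrob i (Finset.mem_range.mp hi) hi0]
  simpa using hlinear

theorem valuation_gaussSum_traceAddChar_sub_le [IsDomain R] (v : Valuation R Γ) {χ : MulChar F R}
    (hχ : χ ≠ 1) (hζ : ζ ^ p = 1) :
    v (gaussSum χ (traceAddChar F hζ) -
        (ζ - 1) * ∑ x : F, χ x * (Algebra.trace (ZMod p) F x).val) ≤ v (ζ - 1) ^ 2 := by
  have hle : v (ζ - 1) ≤ 1 := v.map_sub_le
    (valuation_eq_one_of_pow_eq_one (Fact.out : p.Prime).ne_zero hζ).le v.map_one.le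
  have hexpand : gaussSum χ (traceAddChar F hζ) -
      (ζ - 1) * ∑ x : F, χ x * (Algebra.trace (ZMod p) F x).val =
      ∑ x : F, χ x * (ζ ^ (Algebra.trace (ZMod p) F x).val - 1 -
        (Algebra.trace (ZMod p) F x).val * (ζ - 1)) := by
    rw [gaussSum, Finset.mul_sum, ← sub_zero (∑ x : F, χ x * traceAddChar F hζ x),
      ← MulChar.sum_eq_zero_of_ne_one hχ, ← Finset.sum_sub_distrib, ← Finset.sum_sub_distrib]
    refine Finset.sum_congr rfl fun x _ ↦ ?_
    rw [traceAddChar_apply]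
    ring
  rw [hexpand]
  refine v.map_sum_le fun x _ ↦ ?_
  rw [map_mul]
  exact mul_le_of_le_one_of_le (valuation_mulChar_apply_le_one v χ x)
    (valuation_pow_sub_one_sub_mul_le hle _)

end TraceCharacter

section Teichmuller

/-- A multiplicative character `ω : F → R` is a Teichmüller character with respect to a valuation
`v` if it is additive modulo elements of valuation `< 1`. For `F` a finite field this says that `ω`
lifts an embedding of `F` into the residue field of `v`. -/
def IsTeichmuller {F R Γ : Type*} [CommRing F] [CommRing R] [LinearOrderedCommGroupWithZero Γ]
    (v : Valuation R Γ) (ω : MulChar F R) : Prop :=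
  ∀ x y, v (ω (x + y) - (ω x + ω y)) < 1

namespace IsTeichmuller

section Field

variable {F R Γ : Type*} [Field F] [CommRing R] [LinearOrderedCommGroupWithZero Γ]
  {v : Valuation R Γ} {ω : MulChar F R}

theorem valuation_sum_sub_lt_one (hω : IsTeichmuller v ω) {ι : Type*} (s : Finset ι) (a : ι → F) :
    v (∑ i ∈ s, ω (a i) - ω (∑ i ∈ s, a i)) < 1 := by
  classical
  induction s using Finset.induction_on with
  | empty => simp [ω.map_zero]
  | insert i s hi ih =>
    rw [Finset.sum_insert hi, Finset.sum_insert hi]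
    convert v.map_sub_lt ih (hω (a i) (∑ i ∈ s, a i)) using 2
    ring

theorem valuation_mul_natCast_sub_lt_one (hω : IsTeichmuller v ω) (x : F) (n : ℕ) :
    v (ω x * n - ω (x * n)) < 1 := by
  simpa [mul_comm] using hω.valuation_sum_sub_lt_one (Finset.range n) fun _ ↦ x

theorem valuation_char_lt_one (hω : IsTeichmuller v ω) (p : ℕ) [CharP F p] : v (p : R) < 1 := by
  simpa [ω.map_zero] using hω.valuation_mul_natCast_sub_lt_one 1 p

theorem valuation_primitiveRoot_sub_one_lt_one [IsDomain R] (hω : IsTeichmuller v ω) {p : ℕ}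
    [Fact p.Prime] [CharP F p] {ζ : R} (hζ : IsPrimitiveRoot ζ p) : v (ζ - 1) < 1 := by
  have hlt := hω.valuation_char_lt_one p
  contrapose! hlt
  rw [← valuation_primitiveRoot_sub_one_pow v hζ]
  exact one_le_pow_of_one_le' hlt _

theorem valuation_sum_mul_natCast_eq_one [Finite F] (hω : IsTeichmuller v ω) {ι : Type*}
    (s : Finset ι) (a : ι → F) (n : ι → ℕ) (h : ∑ i ∈ s, a i * n i ≠ 0) :
    v (∑ i ∈ s, ω (a i) * n i) = 1 := by
  have hunit : v (ω (∑ i ∈ s, a i * n i)) = 1 :=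
    valuation_mulChar_apply_of_isUnit v ω h.isUnit
  have hterms : v (∑ i ∈ s, (ω (a i) * n i - ω (a i * n i))) < 1 :=
    v.map_sum_lt one_ne_zero fun i _ ↦ hω.valuation_mul_natCast_sub_lt_one (a i) (n i)
  rw [← hunit]
  refine v.map_eq_of_sub_lt ?_
  rw [hunit]
  convert v.map_add_lt hterms (hω.valuation_sum_sub_lt_one s fun i ↦ a i * n i) using 2
  rw [Finset.sum_sub_distrib]
  ring

theorem eq_one_of_apply_eq_one [Finite F] (hω : IsTeichmuller v ω) {x : F} (hx : ω x = 1) :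
    x = 1 := by
  by_contra hne
  have hlt : v (ω (x - 1)) < 1 := by
    simpa [hx, v.map_neg] using hω (x - 1) 1
  exact hlt.ne (valuation_mulChar_apply_of_isUnit v ω (sub_ne_zero.mpr hne).isUnit)

variable [Fintype F]

theorem orderOf_eq_card_sub_one (hω : IsTeichmuller v ω) : orderOf ω = Fintype.card F - 1 := by
  classical
  refine Nat.dvd_antisymm ?_ ?_
  · rw [orderOf_dvd_iff_pow_eq_one, ← Fintype.card_units]
    exact ω.pow_card_eq_one
  · rw [← FiniteField.forall_pow_eq_one_iff]
    refine fun x ↦ Units.ext (hω.eq_one_of_apply_eq_one ?_)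
    rw [Units.val_pow_eq_pow_val, map_pow, ← MulChar.pow_apply_coe, pow_orderOf_eq_one,
      MulChar.one_apply_coe]

theorem inv_pow_ne_one (hω : IsTeichmuller v ω) {j : ℕ} (hj0 : j ≠ 0)
    (hj : j < Fintype.card F - 1) : ω⁻¹ ^ j ≠ 1 :=
  pow_ne_one_of_lt_orderOf hj0 (by rwa [orderOf_inv, hω.orderOf_eq_card_sub_one])

theorem inv_inv_pow (hω : IsTeichmuller v ω) {j : ℕ} (hj : j ≤ Fintype.card F - 1) :
    (ω⁻¹ ^ j)⁻¹ = ω⁻¹ ^ (Fintype.card F - 1 - j) := by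
  rw [inv_eq_iff_mul_eq_one, ← pow_add, Nat.add_sub_cancel' hj, ← hω.orderOf_eq_card_sub_one,
    ← orderOf_inv, pow_orderOf_eq_one]

end Field

section GaussSum

variable {p : ℕ} [Fact p.Prime] {F K Γ : Type*} [Field F] [Fintype F] [Algebra (ZMod p) F]
  [Field K] [LinearOrderedCommGroupWithZero Γ] {v : Valuation K Γ} {ω : MulChar F K} {ζ : K}

theorem valuation_gaussSum_inv (hω : IsTeichmuller v ω) (hζ : IsPrimitiveRoot ζ p)
    (hF : 2 < Fintype.card F) :
    v (gaussSum ω⁻¹ (traceAddChar F hζ.pow_eq_one)) = v (ζ - 1) := by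
  have hpos : 0 < v (ζ - 1) :=
    v.pos_iff.mpr (sub_ne_zero.mpr (hζ.ne_one (Fact.out : p.Prime).one_lt))
  have : CharP F p := charP_of_injective_algebraMap (algebraMap (ZMod p) F).injective p
  have hlt := hω.valuation_primitiveRoot_sub_one_lt_one hζ
  have htrace : ∑ x : F, x⁻¹ * ((Algebra.trace (ZMod p) F x).val : F) = -1 := by
    simpa only [← map_natCast (algebraMap (ZMod p) F), ZMod.natCast_zmod_val]
      using sum_inv_mul_trace (p := p) hF
  have hunit : v (∑ x : F, ω⁻¹ x * ((Algebra.trace (ZMod p) F x).val : K)) = 1 := by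
    simp_rw [MulChar.inv_apply']
    exact hω.valuation_sum_mul_natCast_eq_one _ _ _ (htrace ▸ neg_ne_zero.mpr one_ne_zero)
  have hlinear : v ((ζ - 1) * ∑ x : F, ω⁻¹ x * ((Algebra.trace (ZMod p) F x).val : K)) =
      v (ζ - 1) := by
    rw [map_mul, hunit, mul_one]
  have hne : ω⁻¹ ≠ 1 := by
    simpa using hω.inv_pow_ne_one one_ne_zero (by lia)
  rw [← hlinear]
  refine v.map_eq_of_sub_lt ?_
  rw [hlinear]
  refine (valuation_gaussSum_traceAddChar_sub_le v hne hζ.pow_eq_one).trans_lt ?_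
  exact pow_lt_self_of_lt_one₀ hpos hlt one_lt_two

theorem pow_sum_digits_le_valuation_gaussSum (hω : IsTeichmuller v ω) (hζ : IsPrimitiveRoot ζ p)
    {j : ℕ} (hj : j < Fintype.card F - 1) :
    v (ζ - 1) ^ (Nat.digits p j).sum ≤
      v (gaussSum (ω⁻¹ ^ j) (traceAddChar F hζ.pow_eq_one)) := by
  have : CharP F p := charP_of_injective_algebraMap (algebraMap (ZMod p) F).injective p
  have hzero : v (gaussSum (ω⁻¹ ^ 0) (traceAddChar F hζ.pow_eq_one)) = 1 := by
    rw [pow_zero, gaussSum_one_left (traceAddChar_ne_one hζ), v.map_neg, v.map_one]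
  have hfrobenius (m : ℕ) : v (gaussSum (ω⁻¹ ^ (p * m)) (traceAddChar F hζ.pow_eq_one)) =
      v (gaussSum (ω⁻¹ ^ m) (traceAddChar F hζ.pow_eq_one)) := by
    rw [mul_comm, pow_mul,
      gaussSum_pow_of_frobenius_invariant _ (traceAddChar_pow_char hζ.pow_eq_one)]
  have hmul (i k : ℕ) (hik : i + k < Fintype.card F - 1) :
      v (gaussSum (ω⁻¹ ^ i) (traceAddChar F hζ.pow_eq_one)) *
        v (gaussSum (ω⁻¹ ^ k) (traceAddChar F hζ.pow_eq_one)) ≤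
          v (gaussSum (ω⁻¹ ^ (i + k)) (traceAddChar F hζ.pow_eq_one)) := by
    rcases eq_or_ne (i + k) 0 with hik0 | hik0
    · obtain ⟨rfl, rfl⟩ := Nat.add_eq_zero_iff.mp hik0
      rw [hzero, one_mul]
    · have hne := hω.inv_pow_ne_one hik0 hik
      rw [pow_add] at hne ⊢
      exact valuation_gaussSum_mul_le v hne _
  rcases Nat.eq_zero_or_pos j with rfl | hj0
  · simpa using hzero.ge
  simpa only [pow_one, hω.valuation_gaussSum_inv hζ (by lia)] using
    pow_sum_digits_le_of_mul_le (Fact.out : p.Prime).one_lt hzero hfrobenius hmul hj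

theorem valuation_gaussSum (hω : IsTeichmuller v ω) (hζ : IsPrimitiveRoot ζ p)
    {j : ℕ} (hj : j < Fintype.card F - 1) :
    v (gaussSum (ω⁻¹ ^ j) (traceAddChar F hζ.pow_eq_one)) =
      v (ζ - 1) ^ (Nat.digits p j).sum := by
  rcases Nat.eq_zero_or_pos j with rfl | hj0
  · simp [gaussSum_one_left (traceAddChar_ne_one hζ)]
  have hcard : Fintype.card F = p ^ Module.finrank (ZMod p) F := by
    simpa [ZMod.card] using Module.card_eq_pow_finrank (K := ZMod p) (V := F)
  have hpos : 0 < v (ζ - 1) :=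
    v.pos_iff.mpr (sub_ne_zero.mpr (hζ.ne_one (Fact.out : p.Prime).one_lt))
  have hreflect := valuation_gaussSum_mul_gaussSum_inv v (hω.inv_pow_ne_one hj0.ne' hj)
    (AddChar.IsPrimitive.of_ne_one (traceAddChar_ne_one hζ))
  rw [hω.inv_inv_pow hj.le] at hreflect
  have hdigits : v (Fintype.card F : K) = v (ζ - 1) ^ (Nat.digits p j).sum *
      v (ζ - 1) ^ (Nat.digits p (Fintype.card F - 1 - j)).sum := by
    rw [← pow_add, hcard, sum_digits_add_sum_digits_pow_sub_one_sub (Fact.out : p.Prime).one_lt _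
      (by lia), Nat.cast_pow, map_pow, ← valuation_primitiveRoot_sub_one_pow v hζ, ← pow_mul,
      mul_comm]
  refine le_antisymm ?_ (hω.pow_sum_digits_le_valuation_gaussSum hζ hj)
  refine le_of_mul_le_mul_right ?_
    (pow_pos hpos (Nat.digits p (Fintype.card F - 1 - j)).sum)
  rw [← hdigits, ← hreflect]
  exact mul_le_mul_right (hω.pow_sum_digits_le_valuation_gaussSum hζ (by lia)) _

end GaussSum

end IsTeichmuller

end Teichmuller

section WittVector

variable {p : ℕ} [Fact p.Prime] {F R : Type*} [Field F] [CommRing R]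

/-- The character `x ↦ [x]` given by Teichmüller representatives in the Witt vectors of `F`,
transported to `R` along a ring homomorphism. -/
noncomputable def wittTeichmullerChar (ι : WittVector p F →+* R) : MulChar F R where
  toMonoidHom := (ι : WittVector p F →* R).comp (WittVector.teichmuller p)
  map_nonunit' x hx := by
    obtain rfl : x = 0 := by simpa using hx
    simp [WittVector.teichmuller_zero]

theorem wittTeichmullerChar_apply (ι : WittVector p F →+* R) (x : F) :
    wittTeichmullerChar ι x = ι (WittVector.teichmuller p x) := rfl

theorem isTeichmuller_wittTeichmullerChar [CharP F p] [PerfectRing F p] {Γ : Type*}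
    [LinearOrderedCommGroupWithZero Γ] {v : Valuation R Γ} (hp : v (p : R) < 1)
    {ι : WittVector p F →+* R} (hι : ∀ x, v (ι x) ≤ 1) :
    IsTeichmuller v (wittTeichmullerChar ι) := by
  intro x y
  have hmem : WittVector.teichmuller p (x + y) -
      (WittVector.teichmuller p x + WittVector.teichmuller p y) ∈
        Ideal.span {(p : WittVector p F)} := by
    have hcoeff (z : F) : WittVector.constantCoeff (WittVector.teichmuller p z) = z :=
      WittVector.teichmuller_coeff_zero p z
    rw [← WittVector.ker_constantCoeff, RingHom.mem_ker, map_sub, hcoeff, map_add, hcoeff, hcoeff,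
      sub_self]
  obtain ⟨z, hz⟩ := Ideal.mem_span_singleton.mp hmem
  simp only [wittTeichmullerChar_apply, ← map_add, ← map_sub, hz, map_mul, map_natCast]
  exact mul_lt_one_of_lt_of_le hp (hι z)

theorem gaussSum_wittTeichmullerChar_inv_pow [Fintype F] [Fintype Fˣ] [Algebra (ZMod p) F]
    (ι : WittVector p F →+* R) {ζ : R} (hζ : ζ ^ p = 1) (j : ℕ) :
    gaussSum ((wittTeichmullerChar ι)⁻¹ ^ j) (traceAddChar F hζ) =
      ∑ x : Fˣ, ι (WittVector.teichmuller p ((x⁻¹ : Fˣ) : F)) ^ j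
        * ζ ^ (Algebra.trace (ZMod p) F x).val := by
  refine Eq.symm <|
    Fintype.sum_of_injective Units.val Units.val_injective _ _ (fun x hx ↦ ?_) fun x ↦ ?_
  · rw [MulChar.map_nonunit _ hx, zero_mul]
  · rw [MulChar.pow_apply_coe, MulChar.inv_apply', traceAddChar_apply, wittTeichmullerChar_apply,
      Units.val_inv_eq_inv_val]

end WittVector

theorem gauss_sum_valuation_general {p : ℕ} [Fact p.Prime] {F : Type*} [Field F] [Fintype F]
    [Algebra (ZMod p) F] {K : Type*} [Field K] {Γ : Type*} [LinearOrderedCommGroupWithZero Γ]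
    {v : Valuation K Γ} {ω : MulChar F K} (hω : IsTeichmuller v ω) {ζ : K}
    (hζ : IsPrimitiveRoot ζ p) {j : ℕ} (hj : j < Fintype.card F - 1) :
    v (-gaussSum (ω⁻¹ ^ j) (traceAddChar F hζ.pow_eq_one)) ^ (p - 1) =
      v (p : K) ^ (Nat.digits p j).sum := by
  rw [v.map_neg, hω.valuation_gaussSum hζ hj, pow_right_comm,
    valuation_primitiveRoot_sub_one_pow v hζ]

/-- The `p`-adic valuation of the Gauss sum `g(j) = τ(ω^{-j})` equals
`wt_p(j)/(p-1)`. The Teichmüller character `ω` is realized via an embedding `ι` of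
the Witt vectors `𝕎(F_q)` into `K = ℚ_p(ξ,ζ)`, and the normalized valuation
identity `ν_p(g(j)) = wt_p(j)/(p-1)` is expressed (clearing denominators, using
`ν_p(p) = 1`) as `v(g(j))^{p-1} = v(p)^{wt_p(j)}` for the multiplicative
`p`-adic valuation `v` on `K` (which satisfies `v(p) < 1`, `v(p) ≠ 0` and the
ramification identity `v(ζ-1)^{p-1} = v(p)`). -/
theorem gauss_sum_valuation (p : ℕ) [Fact p.Prime] (n : ℕ) (hn : 1 ≤ n)
    (F : Type*) [Field F] [Fintype F] [DecidableEq F] [CharP F p] [Algebra (ZMod p) F]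
    (hcard : Fintype.card F = p ^ n)
    (K : Type*) [Field K] (Γ : Type*) [LinearOrderedCommGroupWithZero Γ]
    (v : Valuation K Γ)
    (hvp0 : v (p : K) ≠ 0) (hvp1 : v (p : K) < 1)
    (ι : WittVector p F →+* K) (hι : Function.Injective ι)
    (hιint : ∀ x : WittVector p F, v (ι x) ≤ 1)
    (ζ : K) (hζ : IsPrimitiveRoot ζ p)
    (hram : v (ζ - 1) ^ (p - 1) = v (p : K))
    (j : ℕ) (hj1 : 1 ≤ j) (hj2 : j < p ^ n - 1) :
    v (- ∑ x : Fˣ, ι (WittVector.teichmuller p ((x⁻¹ : Fˣ) : F)) ^ j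
          * ζ ^ (Algebra.trace (ZMod p) F x).val) ^ (p - 1)
      = v (p : K) ^ ((Nat.digits p j).sum) := by
  rw [← gaussSum_wittTeichmullerChar_inv_pow ι hζ.pow_eq_one]
  exact gauss_sum_valuation_general (isTeichmuller_wittTeichmullerChar hvp1 hιint) hζ (hcard ▸ hj2)
end

section
/- Stickelberger's congruence: with q = p^n and π the unique (p-1)-th root of -p in ℚ_p(ξ,ζ) satisfying π ≡ ζ - 1 (mod π²), for 1 ≤ j < q-1 with base-p digits j = j_0 + j_1 p + ... + j_{n-1} p^{n-1}, the Gauss sum g(j) = τ(ω^{-j}) satisfies g(j) ≡ π^{wt_p(j)} / (j_0! ⋯ j_{n-1}!) (mod π^{wt_p(j)+1}). -/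
/-!
Write `g k` for the Gauss sum of `ω⁻ᵏ`. The congruence is proved by induction on `k`. The Frobenius
fixes the trace, so `g (p * k) = g k`. Otherwise `g 1 * g k = -J(ω⁻¹, ω⁻ᵏ) * g (k + 1)`, where the
Jacobi sum `J(ω⁻¹, ω⁻ᵏ)` reduces to `-(k + 1)` in `F`, so that, as long as `p ∤ k + 1`, passing from
`k` to `k + 1` multiplies the leading term by `π / (k + 1)`. The start of the induction,
`g 1 ≡ ζ - 1` modulo `(ζ - 1) ^ 2`, comes from `ζ ^ t ≡ 1 + t * (ζ - 1)` and `∑ x⁻¹ * Tr x = -1`.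

All of this takes place in a ring containing `π`. That `π` lies in `W(F)[ζ]` follows from Nakayama's
lemma for the finite `W(F)`-algebra `W(F)[ζ, π]`, in which every element is congruent modulo every
power of `π`, hence modulo `p`, to an element of `W(F)[ζ]`.
-/

namespace Stickelberger

open Finset WittVector

section PowerSums

variable {F : Type*} [Field F] [Fintype F]

lemma sum_inv_eq_zero (hF : 2 < Fintype.card F) : ∑ x : F, x⁻¹ = 0 := by
  refine (Equiv.sum_comp (Equiv.inv F) fun x ↦ x).trans ?_
  simpa using FiniteField.sum_pow_lt_card_sub_one F 1 (by omega)

lemma sum_inv_mul_one_sub_pow (hF : 2 < Fintype.card F) {m : ℕ} (hm : m ≤ Fintype.card F - 1) :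
    ∑ x : F, x⁻¹ * (1 - x) ^ m = m := by
  classical
  have expand (x : F) : x⁻¹ * (1 - x) ^ m =
      x⁻¹ - ∑ i ∈ range m, (1 - x) ^ i + if x = 0 then (m : F) else 0 := by
    rcases eq_or_ne x 0 with rfl | hx
    · simp
    · rw [if_neg hx]
      field_simp
      linear_combination -geom_sum_mul (1 - x) m
  have sum_pow (i : ℕ) (hi : i ∈ range m) : ∑ x : F, (1 - x) ^ i = 0 :=
    (Equiv.sum_comp (Equiv.subLeft (1 : F)) (· ^ i)).trans <|
      FiniteField.sum_pow_lt_card_sub_one F i ((mem_range.1 hi).trans_le hm)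
  simp_rw [expand]
  rw [sum_add_distrib, sum_sub_distrib, sum_inv_eq_zero hF, sum_comm, sum_eq_zero sum_pow]
  simp

lemma sum_inv_mul_self : ∑ x : F, x⁻¹ * x = -1 := by
  classical
  have h (x : F) : x⁻¹ * x = 1 - if x = 0 then 1 else 0 := by
    rcases eq_or_ne x 0 with rfl | hx <;> simp [*]
  simp_rw [h, sum_sub_distrib]
  simp

lemma sum_inv_mul_pow_eq_zero {m : ℕ} (h1 : 1 < m) (hm : m < Fintype.card F) :
    ∑ x : F, x⁻¹ * x ^ m = 0 := by
  have h (x : F) : x⁻¹ * x ^ m = x ^ (m - 1) := by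
    rcases eq_or_ne x 0 with rfl | hx
    · rw [zero_pow (by omega), zero_pow (by omega), mul_zero]
    · rw [inv_mul_eq_iff_eq_mul₀ hx, ← pow_succ', Nat.sub_add_cancel h1.le]
  simp_rw [h]
  exact FiniteField.sum_pow_lt_card_sub_one F _ (by omega)

lemma sum_inv_mul_trace (p : ℕ) [Fact p.Prime] [Algebra (ZMod p) F] :
    ∑ x : F, x⁻¹ * algebraMap (ZMod p) F (Algebra.trace (ZMod p) F x) = -1 := by
  have hp := (Fact.out : p.Prime).one_lt
  have hcard : Fintype.card F = p ^ Module.finrank (ZMod p) F := by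
    simpa using Module.card_eq_pow_finrank (K := ZMod p) (V := F)
  obtain ⟨n, hn⟩ := Nat.exists_eq_succ_of_ne_zero (Module.finrank_pos (R := ZMod p) (M := F)).ne'
  simp_rw [FiniteField.algebraMap_trace_eq_sum_pow, Nat.card_zmod, hn, Nat.succ_eq_add_one,
    sum_range_succ', mul_add, mul_sum, pow_zero, pow_one]
  rw [sum_add_distrib, sum_comm, sum_inv_mul_self, sum_eq_zero, zero_add]
  intro i hi
  refine sum_inv_mul_pow_eq_zero (Nat.one_lt_pow i.succ_ne_zero hp) ?_
  rw [hcard, hn]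
  exact Nat.pow_lt_pow_right hp (Nat.succ_lt_succ (mem_range.1 hi))

end PowerSums

section InverseTeichmuller

/-- The inverse `ω⁻¹` of the Teichmüller character, with values in the Witt vectors. -/
noncomputable def invTeichmuller (p : ℕ) [Fact p.Prime] (F : Type*) [Field F] :
    MulChar F (WittVector p F) where
  toMonoidHom := (teichmuller p).comp invMonoidHom
  map_nonunit' a ha := by
    obtain rfl : a = 0 := by simpa using ha
    simp [teichmuller_zero]

variable {p : ℕ} [Fact p.Prime] {F : Type*} [Field F]

lemma invTeichmuller_apply (x : F) : invTeichmuller p F x = teichmuller p x⁻¹ := rfl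

lemma constantCoeff_invTeichmuller (x : F) : constantCoeff (invTeichmuller p F x) = x⁻¹ :=
  teichmuller_coeff_zero p x⁻¹

lemma constantCoeff_invTeichmuller_pow_unit (k : ℕ) (x : Fˣ) :
    constantCoeff ((invTeichmuller p F ^ k) x) = ((x⁻¹ : Fˣ) : F) ^ k := by
  rw [MulChar.pow_apply_coe, map_pow, constantCoeff_invTeichmuller, Units.val_inv_eq_inv_val]

lemma constantCoeff_invTeichmuller_pow [Fintype F] {k : ℕ} (hk : k < Fintype.card F - 1) (x : F) :
    constantCoeff ((invTeichmuller p F ^ k) x) = x ^ (Fintype.card F - 1 - k) := by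
  rcases eq_or_ne x 0 with rfl | hx
  · rw [MulChar.map_zero, map_zero, zero_pow (by omega)]
  · rw [← Units.val_mk0 hx, constantCoeff_invTeichmuller_pow_unit, Units.val_inv_eq_inv_val,
      Units.val_mk0, pow_sub₀ x hx hk.le, FiniteField.pow_card_sub_one_eq_one x hx, one_mul,
      inv_pow]

lemma constantCoeff_jacobiSum_invTeichmuller [Fintype F] {k : ℕ}
    (hk : k + 1 < Fintype.card F - 1) :
    constantCoeff (jacobiSum (invTeichmuller p F) (invTeichmuller p F ^ k)) =
      -((k + 1 : ℕ) : F) := by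
  simp_rw [jacobiSum, map_sum, map_mul, constantCoeff_invTeichmuller,
    constantCoeff_invTeichmuller_pow (Nat.lt_of_succ_lt hk)]
  rw [sum_inv_mul_one_sub_pow (by omega) (Nat.sub_le _ _), eq_neg_iff_add_eq_zero, ← Nat.cast_add,
    show Fintype.card F - 1 - k + (k + 1) = Fintype.card F by omega, Nat.cast_card_eq_zero]

lemma constantCoeff_sum_invTeichmuller_mul_trace [Fintype F] [Algebra (ZMod p) F] :
    constantCoeff (∑ x, invTeichmuller p F x *
      ((Algebra.trace (ZMod p) F x).val : WittVector p F)) = -1 := by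
  rw [map_sum, ← sum_inv_mul_trace p]
  refine sum_congr rfl fun x _ ↦ ?_
  rw [map_mul, map_natCast, constantCoeff_invTeichmuller, ← map_natCast (algebraMap (ZMod p) F),
    ZMod.natCast_rightInverse]

lemma ringHomComp_invTeichmuller_pow_ne_one [Fintype F] [CharP F p] {R : Type*} [CommRing R]
    [Nontrivial R] (ι : WittVector p F →+* R) {k : ℕ} (hk0 : k ≠ 0) (hk : k < Fintype.card F - 1) :
    (invTeichmuller p F ^ k).ringHomComp ι ≠ 1 := by
  intro h
  have hpow (x : Fˣ) : x ^ k = 1 := by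
    set a := (invTeichmuller p F ^ k) (x⁻¹ : Fˣ) - 1 with ha
    have hιa : ι a = 0 := by
      have := MulChar.eq_one_iff.1 h x⁻¹
      rwa [MulChar.ringHomComp_apply, ← sub_eq_zero, ← map_one ι, ← map_sub] at this
    have hconst : constantCoeff a = 0 := by
      by_contra hne
      exact ((isUnit_of_coeff_zero_ne_zero a hne).map ι).ne_zero hιa
    rw [ha, map_sub, map_one, sub_eq_zero, constantCoeff_invTeichmuller_pow_unit, inv_inv] at hconst
    exact Units.ext hconst
  have hdvd := (FiniteField.forall_pow_eq_one_iff F k).1 hpow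
  exact hk.not_ge (Nat.le_of_dvd (Nat.pos_of_ne_zero hk0) hdvd)

lemma dvd_map_of_constantCoeff_eq_zero [CharP F p] [PerfectRing F p] {R : Type*} [CommRing R]
    {π : R} (ι : WittVector p F →+* R) (hπ : π ∣ (p : R)) {a : WittVector p F}
    (ha : constantCoeff a = 0) : π ∣ ι a := by
  have hdvd : (p : WittVector p F) ∣ a := by
    rw [← Ideal.mem_span_singleton, ← ker_constantCoeff]
    exact ha
  exact hπ.trans (by simpa using map_dvd ι hdvd)

end InverseTeichmuller

section TraceCharacter

variable {p : ℕ} [Fact p.Prime] {F : Type*} [Field F] [Algebra (ZMod p) F]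
  {R : Type*} [CommRing R] {ζ : R}

variable (p F) in
/-- The additive character `μ : x ↦ ζ ^ Tr x` of `F`. -/
noncomputable def traceChar (hζ : ζ ^ p = 1) : AddChar F R :=
  (AddChar.zmodChar p hζ).compAddMonoidHom (Algebra.trace (ZMod p) F).toAddMonoidHom

lemma traceChar_apply (hζ : ζ ^ p = 1) (x : F) :
    traceChar p F hζ x = ζ ^ (Algebra.trace (ZMod p) F x).val := rfl

lemma traceChar_ne_one [Finite F] (hζ : ζ ^ p = 1) (h1 : ζ ≠ 1) : traceChar p F hζ ≠ 1 := by
  obtain ⟨x, hx⟩ := Algebra.trace_surjective (ZMod p) F 1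
  have : Fact (1 < p) := ⟨(Fact.out : p.Prime).one_lt⟩
  intro h
  have hx1 := DFunLike.congr_fun h x
  rw [traceChar_apply, hx, ZMod.val_one, pow_one, AddChar.one_apply] at hx1
  exact h1 hx1

lemma traceChar_pow_char [Finite F] (hζ : ζ ^ p = 1) (x : F) :
    traceChar p F hζ (x ^ p) = traceChar p F hζ x := by
  have h := Algebra.trace_eq_of_algEquiv (FiniteField.frobeniusAlgEquivOfAlgebraic (ZMod p) F) x
  simp only [FiniteField.coe_frobeniusAlgEquivOfAlgebraic, ZMod.card] at h
  rw [traceChar_apply, traceChar_apply, h]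

lemma gaussSum_pow_char_traceChar [Fintype F] (hζ : ζ ^ p = 1) (χ : MulChar F R) :
    gaussSum (χ ^ p) (traceChar p F hζ) = gaussSum χ (traceChar p F hζ) := by
  have hbij : Function.Bijective fun x : F ↦ x ^ p := by
    have := (FiniteField.frobeniusAlgEquivOfAlgebraic (ZMod p) F).bijective
    rwa [FiniteField.coe_frobeniusAlgEquivOfAlgebraic, ZMod.card] at this
  refine Eq.trans (sum_congr rfl fun x _ ↦ ?_)
    (hbij.sum_comp fun x ↦ χ x * traceChar p F hζ x)
  rw [traceChar_pow_char, MulChar.pow_apply' _ (Fact.out : p.Prime).ne_zero, map_pow]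

end TraceCharacter

lemma gaussSum_eq_sum_units {R R' : Type*} [CommRing R] [Fintype R] [Fintype Rˣ] [CommRing R']
    (χ : MulChar R R') (ψ : AddChar R R') : gaussSum χ ψ = ∑ x : Rˣ, χ x * ψ x := by
  refine (Fintype.sum_of_injective _ Units.val_injective _ _ (fun x hx ↦ ?_) fun _ ↦ rfl).symm
  rw [χ.map_nonunit fun ⟨u, hu⟩ ↦ hx ⟨u, hu⟩, zero_mul]

section TeichmullerGaussSum

variable {p : ℕ} [Fact p.Prime] {F : Type*} [Field F] [Fintype F] [Algebra (ZMod p) F]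
  {R : Type*} [CommRing R] {ζ : R}

/-- The Gauss sum `g(k) = τ(ω⁻ᵏ)`, with the sign convention `τ(χ) = -∑ χ(x) μ(x)`. The values of
`ω` are moved from the Witt vectors to `R` by `ι`. -/
noncomputable def teichmullerGaussSum (ι : WittVector p F →+* R) (hζ : ζ ^ p = 1) (k : ℕ) : R :=
  -gaussSum ((invTeichmuller p F ^ k).ringHomComp ι) (traceChar p F hζ)

lemma teichmullerGaussSum_eq_neg_sum_units [Fintype Fˣ] (ι : WittVector p F →+* R)
    (hζ : ζ ^ p = 1) (k : ℕ) :
    teichmullerGaussSum ι hζ k = -∑ x : Fˣ,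
      ι (teichmuller p ((x⁻¹ : Fˣ) : F)) ^ k * ζ ^ (Algebra.trace (ZMod p) F x).val := by
  simp only [teichmullerGaussSum, gaussSum_eq_sum_units, MulChar.ringHomComp_apply,
    MulChar.pow_apply_coe, invTeichmuller_apply, map_pow, traceChar_apply, Units.val_inv_eq_inv_val]

lemma teichmullerGaussSum_zero [IsDomain R] (ι : WittVector p F →+* R) (hζ : ζ ^ p = 1)
    (h1 : ζ ≠ 1) : teichmullerGaussSum ι hζ 0 = 1 := by
  rw [teichmullerGaussSum, pow_zero, MulChar.ringHomComp_one,
    gaussSum_one_left (traceChar_ne_one hζ h1), neg_neg]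

lemma teichmullerGaussSum_char_mul (ι : WittVector p F →+* R) (hζ : ζ ^ p = 1) (k : ℕ) :
    teichmullerGaussSum ι hζ (p * k) = teichmullerGaussSum ι hζ k := by
  rw [teichmullerGaussSum, mul_comm p k, pow_mul, ← MulChar.ringHomComp_pow,
    gaussSum_pow_char_traceChar, teichmullerGaussSum]

lemma teichmullerGaussSum_one_mul [CharP F p] [IsDomain R] (ι : WittVector p F →+* R)
    (hζ : ζ ^ p = 1) {k : ℕ} (hk : k + 1 < Fintype.card F - 1) :
    teichmullerGaussSum ι hζ 1 * teichmullerGaussSum ι hζ k =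
      ι (-jacobiSum (invTeichmuller p F) (invTeichmuller p F ^ k)) *
        teichmullerGaussSum ι hζ (k + 1) := by
  have hmul : (invTeichmuller p F).ringHomComp ι * (invTeichmuller p F ^ k).ringHomComp ι =
      (invTeichmuller p F ^ (k + 1)).ringHomComp ι := by
    rw [← MulChar.ringHomComp_mul, ← pow_succ']
  have hne := ringHomComp_invTeichmuller_pow_ne_one ι k.succ_ne_zero hk
  have hJ := jacobiSum_mul_nontrivial (hmul.trans_ne hne) (traceChar p F hζ)
  rw [hmul, jacobiSum_ringHomComp] at hJ
  simp only [teichmullerGaussSum, pow_one, map_neg]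
  linear_combination -hJ

end TeichmullerGaussSum

lemma sub_one_dvd_natCast {R : Type*} [CommRing R] [IsDomain R] {ζ : R} {n : ℕ}
    (hζ : IsPrimitiveRoot ζ n) (hn : 1 < n) : ζ - 1 ∣ (n : R) := by
  have h : (n : R) = -∑ i ∈ range n, (ζ ^ i - 1) := by
    rw [sum_sub_distrib, hζ.geom_sum_eq_zero hn]
    simp
  rw [h, dvd_neg]
  exact dvd_sum fun i _ ↦ sub_one_dvd_pow_sub_one ζ i

section LeadingTerm

variable {p : ℕ} [Fact p.Prime] {F : Type*} [Field F] [Fintype F] [CharP F p] [Algebra (ZMod p) F]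
  {R : Type*} [CommRing R] [IsDomain R] {ζ : R}

lemma sub_one_sq_dvd_teichmullerGaussSum_one_sub (hF : 2 < Fintype.card F)
    (ι : WittVector p F →+* R) (hζ : IsPrimitiveRoot ζ p) :
    (ζ - 1) ^ 2 ∣ teichmullerGaussSum ι hζ.pow_eq_one 1 - (ζ - 1) := by
  set T := invTeichmuller p F
  set t : F → ℕ := fun x ↦ (Algebra.trace (ZMod p) F x).val
  have hT : ∑ x, ι (T x) = 0 := by
    have hne := ringHomComp_invTeichmuller_pow_ne_one (p := p) (F := F) ι one_ne_zero (by omega)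
    rw [pow_one] at hne
    exact MulChar.sum_eq_zero_of_ne_one hne
  have hpow (a : ℕ) : (ζ - 1) ^ 2 ∣ ζ ^ a - 1 - a * (ζ - 1) := by
    have := sq_dvd_add_pow_sub_sub (ζ - 1) 1 a
    rw [add_sub_cancel, one_pow, one_pow, one_mul] at this
    convert this using 1
    ring
  have htrace : ζ - 1 ∣ ι (∑ x, T x * (t x : WittVector p F) + 1) := by
    refine dvd_map_of_constantCoeff_eq_zero ι
      (sub_one_dvd_natCast hζ (Fact.out : p.Prime).one_lt) ?_
    rw [map_add, map_one, constantCoeff_sum_invTeichmuller_mul_trace, neg_add_cancel]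
  have expand : teichmullerGaussSum ι hζ.pow_eq_one 1 - (ζ - 1) =
      -(∑ x, ι (T x) * (ζ ^ t x - 1 - t x * (ζ - 1)) + ∑ x, ι (T x) +
        ι (∑ x, T x * (t x : WittVector p F) + 1) * (ζ - 1)) := by
    simp only [teichmullerGaussSum, pow_one, gaussSum, MulChar.ringHomComp_apply, traceChar_apply,
      map_add, map_sum, map_mul, map_natCast, map_one, mul_sub, sum_sub_distrib, add_mul, sum_mul]
    simp only [T, t, mul_one, one_mul, mul_assoc]
    ring
  rw [expand, hT, add_zero, dvd_neg, sq]
  refine dvd_add (dvd_sum fun x _ ↦ ?_) (mul_dvd_mul_right htrace _)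
  exact (sq (ζ - 1) ▸ hpow (t x)).mul_left _

end LeadingTerm

section PowerCongruences

variable {R : Type*} [CommRing R] {π l : R}

lemma dvd_of_sq_dvd_sub (hπl : π ^ 2 ∣ π - l) : π ∣ l :=
  (dvd_sub_right dvd_rfl).1 ((dvd_pow_self π two_ne_zero).trans hπl)

lemma pow_succ_dvd_pow_sub_pow (hπl : π ^ 2 ∣ π - l) (k : ℕ) : π ^ (k + 1) ∣ π ^ k - l ^ k := by
  induction k with
  | zero => simp
  | succ k ih =>
    have h1 : π ^ (k + 2) ∣ π * (π ^ k - l ^ k) := pow_succ' π (k + 1) ▸ mul_dvd_mul_left π ih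
    have h2 : π ^ (k + 2) ∣ l ^ k * (π - l) :=
      pow_add π k 2 ▸ mul_dvd_mul (pow_dvd_pow_of_dvd (dvd_of_sq_dvd_sub hπl) k) hπl
    convert dvd_add h1 h2 using 1
    ring

lemma pow_succ_dvd_mul_sub_pow_add {x y : R} {m n : ℕ} (hx : π ^ (m + 1) ∣ x - π ^ m)
    (hy : π ^ (n + 1) ∣ y - π ^ n) : π ^ (m + n + 1) ∣ x * y - π ^ (m + n) := by
  obtain ⟨a, ha⟩ := hx
  obtain ⟨b, hb⟩ := hy
  refine ⟨a + b + π * a * b, ?_⟩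
  linear_combination y * ha + (π ^ m + π ^ (m + 1) * a) * hb

lemma pow_succ_dvd_mul_sub_pow_of_isUnit {u d x : R} {n : ℕ} (hu : IsUnit u) (hud : π ∣ u - d)
    (h : π ^ (n + 1) ∣ u * x - π ^ n) : π ^ (n + 1) ∣ d * x - π ^ n := by
  have hux : π ^ n ∣ u * x :=
    (dvd_sub_left dvd_rfl).1 ((pow_dvd_pow π n.le_succ).trans h)
  have hx : π ^ n ∣ x := hu.dvd_mul_left.1 hux
  have hdx : π ^ (n + 1) ∣ (u - d) * x := pow_succ' π n ▸ mul_dvd_mul hud hx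
  convert dvd_sub h hdx using 1
  ring

end PowerCongruences

section Digits

/-- The product `k₀! ⋯ kₙ₋₁!` of the factorials of the base-`b` digits of `k`. -/
def digitFactorial (b k : ℕ) : ℕ := ((b.digits k).map Nat.factorial).prod

variable {b : ℕ}

lemma digits_sum_eq_mod_add (hb : 1 < b) (k : ℕ) :
    (b.digits k).sum = k % b + (b.digits (k / b)).sum := by
  rcases Nat.eq_zero_or_pos k with rfl | hk
  · simp
  · rw [Nat.digits_def' hb hk, List.sum_cons]

lemma digitFactorial_eq_factorial_mod_mul (hb : 1 < b) (k : ℕ) :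
    digitFactorial b k = (k % b).factorial * digitFactorial b (k / b) := by
  rcases Nat.eq_zero_or_pos k with rfl | hk
  · simp [digitFactorial]
  · rw [digitFactorial, Nat.digits_def' hb hk, List.map_cons, List.prod_cons, digitFactorial]

lemma succ_mod_of_not_dvd {k : ℕ} (hk : ¬ b ∣ k + 1) : (k + 1) % b = k % b + 1 := by
  have hsucc := Nat.div_add_mod (k + 1) b
  rw [Nat.succ_div_of_not_dvd hk] at hsucc
  have hdiv := Nat.div_add_mod k b
  omega

lemma digits_sum_succ (hb : 1 < b) {k : ℕ} (hk : ¬ b ∣ k + 1) :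
    (b.digits (k + 1)).sum = (b.digits k).sum + 1 := by
  rw [digits_sum_eq_mod_add hb (k + 1), digits_sum_eq_mod_add hb k, Nat.succ_div_of_not_dvd hk,
    succ_mod_of_not_dvd hk, add_right_comm]

lemma digitFactorial_succ (hb : 1 < b) {k : ℕ} (hk : ¬ b ∣ k + 1) :
    digitFactorial b (k + 1) = (k + 1) % b * digitFactorial b k := by
  rw [digitFactorial_eq_factorial_mod_mul hb (k + 1), digitFactorial_eq_factorial_mod_mul hb k,
    Nat.succ_div_of_not_dvd hk, succ_mod_of_not_dvd hk, Nat.factorial_succ, mul_assoc]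

lemma digits_sum_base_mul (hb : 1 < b) (k : ℕ) : (b.digits (b * k)).sum = (b.digits k).sum := by
  rw [digits_sum_eq_mod_add hb, Nat.mul_mod_right, Nat.mul_div_cancel_left k (by omega), zero_add]

lemma digitFactorial_base_mul (hb : 1 < b) (k : ℕ) :
    digitFactorial b (b * k) = digitFactorial b k := by
  rw [digitFactorial_eq_factorial_mod_mul hb, Nat.mul_mod_right,
    Nat.mul_div_cancel_left k (by omega), Nat.factorial_zero, one_mul]

lemma digitFactorial_eq_prod_range (hb : 1 < b) {n k : ℕ} (hk : k < b ^ n) :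
    digitFactorial b k = ∏ i ∈ range n, ((b.digits k).getD i 0).factorial := by
  simp_rw [Nat.getD_digits k _ hb]
  induction n generalizing k with
  | zero => simp [digitFactorial, Nat.lt_one_iff.1 (pow_zero b ▸ hk)]
  | succ n ih =>
    rw [digitFactorial_eq_factorial_mod_mul hb, prod_range_succ', pow_zero, Nat.div_one, mul_comm,
      ih (Nat.div_lt_of_lt_mul (pow_succ' b n ▸ hk))]
    simp_rw [Nat.div_div_eq_div_mul, pow_succ']

end Digits

section Congruence

variable {p : ℕ} [Fact p.Prime] {F : Type*} [Field F] [Fintype F] [CharP F p] [Algebra (ZMod p) F]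
  {R : Type*} [CommRing R] [IsDomain R] {ζ π : R}

lemma sq_dvd_teichmullerGaussSum_one_sub (hF : 2 < Fintype.card F) (ι : WittVector p F →+* R)
    (hζ : IsPrimitiveRoot ζ p) (hπζ : π ^ 2 ∣ π - (ζ - 1)) :
    π ^ 2 ∣ teichmullerGaussSum ι hζ.pow_eq_one 1 - π := by
  have h := (pow_dvd_pow_of_dvd (dvd_of_sq_dvd_sub hπζ) 2).trans
    (sub_one_sq_dvd_teichmullerGaussSum_one_sub hF ι hζ)
  simpa using dvd_sub h hπζ

lemma pow_succ_dvd_mul_teichmullerGaussSum_succ_sub (ι : WittVector p F →+* R)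
    (hζ : IsPrimitiveRoot ζ p) (hπζ : π ^ 2 ∣ π - (ζ - 1)) {k d w : ℕ} {P : R}
    (hk : k + 1 < Fintype.card F - 1) (hpk : ¬ p ∣ k + 1) (hd : d ≡ k + 1 [MOD p])
    (h : π ^ (w + 1) ∣ P * teichmullerGaussSum ι hζ.pow_eq_one k - π ^ w) :
    π ^ (w + 1 + 1) ∣ d * (P * teichmullerGaussSum ι hζ.pow_eq_one (k + 1)) - π ^ (w + 1) := by
  set J := jacobiSum (invTeichmuller p F) (invTeichmuller p F ^ k)
  have hJ : constantCoeff (-J) = ((k + 1 : ℕ) : F) := by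
    rw [map_neg, constantCoeff_jacobiSum_invTeichmuller hk, neg_neg]
  have hunit : IsUnit (-J) := by
    refine isUnit_of_coeff_zero_ne_zero _ ?_
    change constantCoeff (-J) ≠ 0
    rwa [hJ, Ne, CharP.cast_eq_zero_iff F p]
  have hdvd : π ∣ ι (-J) - d := by
    rw [← map_natCast ι, ← map_sub]
    refine dvd_map_of_constantCoeff_eq_zero ι
      ((dvd_of_sq_dvd_sub hπζ).trans (sub_one_dvd_natCast hζ (Fact.out : p.Prime).one_lt)) ?_
    rw [map_sub, hJ, map_natCast, (CharP.natCast_eq_natCast F p).2 hd, sub_self]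
  refine pow_succ_dvd_mul_sub_pow_of_isUnit (hunit.map ι) hdvd ?_
  have hone := sq_dvd_teichmullerGaussSum_one_sub (by omega) ι hζ hπζ
  have hmul := pow_succ_dvd_mul_sub_pow_add (m := 1) (by simpa using hone) h
  rwa [mul_left_comm, teichmullerGaussSum_one_mul ι _ hk, mul_left_comm, add_comm 1 w] at hmul

theorem pow_succ_dvd_digitFactorial_mul_teichmullerGaussSum_sub (ι : WittVector p F →+* R)
    (hζ : IsPrimitiveRoot ζ p) (hπζ : π ^ 2 ∣ π - (ζ - 1)) {k : ℕ}
    (hk : k < Fintype.card F - 1) :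
    π ^ ((p.digits k).sum + 1) ∣
      digitFactorial p k * teichmullerGaussSum ι hζ.pow_eq_one k - π ^ (p.digits k).sum := by
  have hp := (Fact.out : p.Prime).one_lt
  induction k using Nat.strong_induction_on with
  | _ k ih =>
  rcases k with _ | k
  · simp [digitFactorial, teichmullerGaussSum_zero ι hζ.pow_eq_one (hζ.ne_one hp)]
  by_cases hpk : p ∣ k + 1
  · obtain ⟨l, hl⟩ := hpk
    have hlk : l < k + 1 :=
      hl ▸ lt_mul_of_one_lt_left (Nat.pos_of_ne_zero fun h0 ↦ by simp [h0] at hl) hp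
    rw [hl, digits_sum_base_mul hp, digitFactorial_base_mul hp, teichmullerGaussSum_char_mul]
    exact ih l hlk (hlk.trans hk)
  · rw [digits_sum_succ hp hpk, digitFactorial_succ hp hpk, Nat.cast_mul, mul_assoc]
    exact pow_succ_dvd_mul_teichmullerGaussSum_succ_sub ι hζ hπζ hk hpk (Nat.mod_modEq _ _)
      (ih k k.lt_succ_self (by omega))

end Congruence

section Adjoin

variable {A B : Type*} [CommRing A] [CommRing B] [Algebra A B] {π l : B}

lemma exists_mem_adjoin_dvd_sub {s : Set B} {x : B} (hx : x ∈ Algebra.adjoin A (insert π s)) :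
    ∃ y ∈ Algebra.adjoin A s, π ∣ x - y := by
  induction hx using Algebra.adjoin_induction with
  | mem x hx =>
    rcases hx with rfl | hx
    · exact ⟨0, zero_mem _, by simp⟩
    · exact ⟨x, Algebra.subset_adjoin hx, by simp⟩
  | algebraMap r => exact ⟨_, Subalgebra.algebraMap_mem _ r, by simp⟩
  | add x x' _ _ hx hx' =>
    obtain ⟨y, hy, h⟩ := hx
    obtain ⟨y', hy', h'⟩ := hx'
    exact ⟨y + y', add_mem hy hy', add_sub_add_comm x x' y y' ▸ dvd_add h h'⟩
  | mul x x' _ _ hx hx' =>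
    obtain ⟨y, hy, h⟩ := hx
    obtain ⟨y', hy', h'⟩ := hx'
    refine ⟨y * y', mul_mem hy hy', ?_⟩
    convert dvd_add (h'.mul_left x) (h.mul_right y') using 1
    ring

lemma exists_mem_pow_dvd_sub {S : Subalgebra A B} (hl : l ∈ S) (hπl : π ^ 2 ∣ π - l)
    (hS : ∀ x, ∃ y ∈ S, π ∣ x - y) (k : ℕ) (x : B) : ∃ y ∈ S, π ^ k ∣ x - y := by
  induction k with
  | zero => exact ⟨0, S.zero_mem, by simp⟩
  | succ k ih =>
    obtain ⟨y, hy, z, hz⟩ := ih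
    obtain ⟨t, ht, hzt⟩ := hS z
    refine ⟨y + l ^ k * t, S.add_mem hy (S.mul_mem (S.pow_mem hl k) ht), ?_⟩
    have hzt' : π ^ (k + 1) ∣ π ^ k * (z - t) := pow_succ π k ▸ mul_dvd_mul_left (π ^ k) hzt
    convert dvd_add hzt' ((pow_succ_dvd_pow_sub_pow hπl k).mul_right t) using 1
    linear_combination hz

lemma adjoin_eq_top_of_pow_eq_algebraMap [IsLocalRing A] [Module.Finite A B] {s : Set B}
    (hs : Algebra.adjoin A (insert π s) = ⊤) {m : ℕ} {a : A}
    (ha : a ∈ IsLocalRing.maximalIdeal A) (hπ : π ^ m = algebraMap A B a)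
    (hl : l ∈ Algebra.adjoin A s) (hπl : π ^ 2 ∣ π - l) : Algebra.adjoin A s = ⊤ := by
  rw [← Algebra.toSubmodule_eq_top, eq_top_iff]
  refine Submodule.le_of_le_smul_of_le_jacobson_bot Module.Finite.fg_top
    (IsLocalRing.maximalIdeal_le_jacobson ⊥) fun x _ ↦ ?_
  obtain ⟨y, hy, z, hz⟩ := exists_mem_pow_dvd_sub hl hπl
    (fun x ↦ exists_mem_adjoin_dvd_sub (hs ▸ Algebra.mem_top)) m x
  rw [← add_sub_cancel y x, hz, hπ, ← Algebra.smul_def]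
  exact Submodule.add_mem_sup hy (Submodule.smul_mem_smul ha Submodule.mem_top)

lemma mem_adjoin_of_pow_eq_algebraMap [IsLocalRing A] {s : Set B} (hfin : s.Finite)
    (hint : ∀ x ∈ s, IsIntegral A x) {m : ℕ} (hm : m ≠ 0) {a : A}
    (ha : a ∈ IsLocalRing.maximalIdeal A) (hπ : π ^ m = algebraMap A B a)
    (hl : l ∈ Algebra.adjoin A s) (hπl : ∃ c ∈ Algebra.adjoin A s, π - l = π ^ 2 * c) :
    π ∈ Algebra.adjoin A s := by
  set M := Algebra.adjoin A (insert π s)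
  set s' : Set M := (↑) ⁻¹' s
  have hπint : IsIntegral A π := .of_pow (Nat.pos_of_ne_zero hm) (hπ ▸ isIntegral_algebraMap)
  have : Module.Finite A M := Module.Finite.iff_fg.2 <|
    fg_adjoin_of_finite (hfin.insert π) <| Set.forall_mem_insert.2 ⟨hπint, hint⟩
  have hmap : (Algebra.adjoin A s').map M.val = Algebra.adjoin A s := by
    rw [AlgHom.map_adjoin]
    congr 1
    exact Subtype.image_preimage_coe _ _ |>.trans <|
      Set.inter_eq_right.2 ((Set.subset_insert π s).trans Algebra.subset_adjoin)
  obtain ⟨π', hπ'⟩ : ∃ π' : M, (π' : B) = π :=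
    ⟨⟨π, Algebra.subset_adjoin (Set.mem_insert π s)⟩, rfl⟩
  have hs' : Algebra.adjoin A (insert π' s') = ⊤ := by
    have hpre : insert π' s' = ((↑) : M → B) ⁻¹' insert π s := by
      ext x
      simp only [s', Set.mem_insert_iff, Set.mem_preimage, Subtype.ext_iff, hπ']
    exact hpre ▸ Algebra.adjoin_adjoin_coe_preimage
  rw [← hmap] at hl hπl ⊢
  obtain ⟨l', hl', rfl⟩ := hl
  obtain ⟨_, ⟨c', _, rfl⟩, hc⟩ := hπl
  refine ⟨π', ?_, hπ'⟩
  have htop := adjoin_eq_top_of_pow_eq_algebraMap hs' ha (Subtype.ext (by simpa [hπ'] using hπ))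
    hl' ⟨c', Subtype.ext (by simpa [hπ'] using hc)⟩
  exact htop ▸ Algebra.mem_top

lemma mem_closure_of_pow_eq_neg_prime {p : ℕ} [Fact p.Prime] {k : Type*} [Field k] [CharP k p]
    [PerfectRing k p] {K : Type*} [CommRing K] {ι : WittVector p k →+* K} {ζ π : K} (hζ : ζ ^ p = 1)
    (hπ : π ^ (p - 1) = -(p : K))
    (hπζ : ∃ c ∈ Subring.closure (Set.range ι ∪ {ζ}), π - (ζ - 1) = π ^ 2 * c) :
    π ∈ Subring.closure (Set.range ι ∪ {ζ}) := by
  have hp := (Fact.out : p.Prime)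
  let _ := ι.toAlgebra
  have hclosure (x : K) : x ∈ Subring.closure (Set.range ι ∪ {ζ}) ↔
      x ∈ Algebra.adjoin (WittVector p k) {ζ} := Algebra.mem_adjoin_iff.symm
  simp only [hclosure] at hπζ ⊢
  have hζint : IsIntegral (WittVector p k) ζ := .of_pow hp.pos (hζ ▸ isIntegral_one)
  have hpmem : -(p : WittVector p k) ∈ IsLocalRing.maximalIdeal (WittVector p k) := by
    rw [neg_mem_iff, IsLocalRing.mem_maximalIdeal]
    exact (WittVector.irreducible p).not_isUnit
  exact mem_adjoin_of_pow_eq_algebraMap (Set.finite_singleton ζ) (by simpa using hζint)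
    (Nat.sub_ne_zero_of_lt hp.one_lt) hpmem (by simpa using hπ)
    (sub_mem (Algebra.self_mem_adjoin_singleton _ ζ) (one_mem _)) hπζ

end Adjoin

end Stickelberger

open Stickelberger in
theorem stickelberger_congruence_general (p : ℕ) [Fact p.Prime] (n : ℕ)
    (F : Type*) [Field F] [Fintype F] [Fintype Fˣ] [CharP F p] [Algebra (ZMod p) F]
    (hcard : Fintype.card F = p ^ n) (K : Type*) [CommRing K] [IsDomain K]
    (ι : WittVector p F →+* K) (ζ π : K) (hζ : IsPrimitiveRoot ζ p)
    (O : Subring K) (hιO : ∀ a, ι a ∈ O) (hζO : ζ ∈ O) (hπO : π ∈ O)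
    (hπζ : ∃ c ∈ O, π - (ζ - 1) = π ^ 2 * c) (j : ℕ) (hj : j < p ^ n - 1) :
    ∃ c ∈ O,
      (∏ i ∈ Finset.range n, (((Nat.digits p j).getD i 0).factorial : K))
          * (- ∑ x : Fˣ, ι (WittVector.teichmuller p ((x⁻¹ : Fˣ) : F)) ^ j
                * ζ ^ (Algebra.trace (ZMod p) F x).val)
        - π ^ ((Nat.digits p j).sum)
      = π ^ ((Nat.digits p j).sum + 1) * c := by
  obtain ⟨c, hc, hπc⟩ := hπζ
  have hζ' : IsPrimitiveRoot (⟨ζ, hζO⟩ : O) p :=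
    hζ.of_map_of_injective (f := O.subtype) O.subtype_injective
  have hπζ' : (⟨π, hπO⟩ : O) ^ 2 ∣ ⟨π, hπO⟩ - (⟨ζ, hζO⟩ - 1) := ⟨⟨c, hc⟩, Subtype.ext hπc⟩
  obtain ⟨d, hd⟩ := pow_succ_dvd_digitFactorial_mul_teichmullerGaussSum_sub
    (ι.codRestrict O hιO) hζ' hπζ' (hcard ▸ hj)
  refine ⟨d, d.2, ?_⟩
  rw [teichmullerGaussSum_eq_neg_sum_units,
    digitFactorial_eq_prod_range (Fact.out : p.Prime).one_lt (hj.trans_le (Nat.sub_le _ _))] at hd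
  simpa using congrArg O.subtype hd

/-- Stickelberger's congruence: for `1 ≤ j < q - 1` with base-`p` digits `jᵢ`, the
Gauss sum `g(j) = τ(ω^{-j})` (where `ω` is the Teichmüller character, realized via the
embedding `ι` of the Witt vectors `𝕎(F_q)` into `K = ℚ_p(ξ,ζ)`) satisfies
`g(j) ≡ π^{wt_p(j)} / (j₀! ⋯ j_{n-1}!) (mod π^{wt_p(j)+1})`, i.e. multiplying
through by the unit `j₀! ⋯ j_{n-1}!`, the difference
`(∏ jᵢ!)·g(j) - π^{wt_p(j)}` lies in `π^{wt_p(j)+1}·O`, where `O` is the ring of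
integers of `K`, `π^{p-1} = -p` and `π ≡ ζ - 1 (mod π²)`. -/
theorem stickelberger_congruence (p : ℕ) [Fact p.Prime] (n : ℕ) (hn : 1 ≤ n)
    (F : Type*) [Field F] [Fintype F] [DecidableEq F] [CharP F p] [Algebra (ZMod p) F]
    (hcard : Fintype.card F = p ^ n)
    (K : Type*) [Field K]
    (ι : WittVector p F →+* K) (hι : Function.Injective ι)
    (ζ π : K) (hζ : IsPrimitiveRoot ζ p)
    (hπ : π ^ (p - 1) = -(p : K))
    (hπζ : ∃ c ∈ Subring.closure (Set.range ι ∪ {ζ}), π - (ζ - 1) = π ^ 2 * c)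
    (j : ℕ) (hj1 : 1 ≤ j) (hj2 : j < p ^ n - 1) :
    ∃ c ∈ Subring.closure (Set.range ι ∪ {ζ}),
      (∏ i ∈ Finset.range n, (((Nat.digits p j).getD i 0).factorial : K))
          * (- ∑ x : Fˣ, ι (WittVector.teichmuller p ((x⁻¹ : Fˣ) : F)) ^ j
                * ζ ^ (Algebra.trace (ZMod p) F x).val)
        - π ^ ((Nat.digits p j).sum)
      = π ^ ((Nat.digits p j).sum + 1) * c := by
  exact stickelberger_congruence_general p n F hcard K ι ζ π hζ _
    (fun a ↦ Subring.subset_closure (.inl ⟨a, rfl⟩)) (Subring.subset_closure (.inr rfl))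
    (Stickelberger.mem_closure_of_pow_eq_neg_prime hζ.pow_eq_one hπ hπζ) hπζ j hj2
end

section
/- For p = 2 and q = 2^n, and 1 ≤ j < q - 1, the Gauss sum g(j) = τ(ω^{-j}) (valued in ℚ_2(ξ)) satisfies g(j) ≡ 2^{wt_2(j)} (mod 2^{wt_2(j)+1}), i.e., ν_2(g(j)) = wt_2(j), where wt_2(j) is the binary weight of j. -/
open WittVector

/-!
Let `χ` be a multiplicative character lifting `x ↦ x⁻¹`, and let `g(j)` be minus the Gauss sum of
`χ ^ j` against `x ↦ (-1) ^ Tr x`. Up to factors that reduce to `1`, every digit `1` in the binary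
expansion of `j` contributes a factor `2` to `g(j)`:

* `g(2 * j) = g(j)`, because the trace is invariant under Frobenius;
* `g(1) = 2 * ∑ x, χ x * Tr x`, because `(-1) ^ t = 1 - 2 * t` for `t ∈ {0, 1}` and `∑ x, χ x = 0`,
  and `∑ x, x⁻¹ * Tr x = 1` in characteristic two;
* `g(1) * g(m) = -J(χ, χ ^ m) * g(m + 1)`, where `-J(χ, χ ^ m)` reduces to `m + 1`,
  which is `1` for even `m`.
-/

theorem sum_digits_add_base_mul {b x : ℕ} (hb : 1 < b) (hx : x < b) (y : ℕ) :
    (Nat.digits b (x + b * y)).sum = x + (Nat.digits b y).sum := by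
  by_cases h : x = 0 ∧ y = 0
  · simp [h.1, h.2]
  · rw [Nat.digits_add b hb x y hx (by tauto), List.sum_cons]

section PowerSums

variable {F : Type*} [Field F] [Fintype F]

theorem inv_pow_eq_pow_card_sub_one_sub {m : ℕ} (hm : 0 < m) (hmF : m < Fintype.card F - 1)
    (x : F) : x⁻¹ ^ m = x ^ (Fintype.card F - 1 - m) := by
  rcases eq_or_ne x 0 with rfl | hx
  · rw [inv_zero, zero_pow hm.ne', zero_pow (by lia)]
  · rw [inv_pow]
    refine inv_eq_of_mul_eq_one_right ?_
    rw [pow_mul_pow_sub x hmF.le, FiniteField.pow_card_sub_one_eq_one x hx]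

theorem sum_inv_eq_zero (hF : 2 < Fintype.card F) : ∑ x : F, x⁻¹ = 0 := by
  rw [inv_involutive.bijective.sum_comp (fun x : F => x)]
  simpa using FiniteField.sum_pow_lt_card_sub_one F 1 (by lia)

theorem sum_one_sub_pow_eq_zero {i : ℕ} (hi : i < Fintype.card F - 1) :
    ∑ x : F, (1 - x) ^ i = 0 :=
  ((Equiv.subLeft (1 : F)).sum_comp (fun x => x ^ i)).trans
    (FiniteField.sum_pow_lt_card_sub_one F i hi)

theorem sum_inv_mul_one_sub_pow {m : ℕ} (hm : 0 < m) (hmF : m < Fintype.card F - 1) :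
    ∑ x : F, x⁻¹ * (1 - x) ^ m = m := by
  classical
  have geom (x : F) : x⁻¹ * (1 - x) ^ m =
      x⁻¹ - ∑ i ∈ Finset.range m, (1 - x) ^ i + if x = 0 then (m : F) else 0 := by
    rcases eq_or_ne x 0 with rfl | hx
    · simp
    · have h := mul_neg_geom_sum (1 - x) m
      rw [sub_sub_cancel] at h
      rw [if_neg hx, add_zero, ← mul_right_inj' hx, mul_sub, h, mul_inv_cancel_left₀ hx,
        mul_inv_cancel₀ hx, sub_sub_cancel]
  have geom_sum : ∑ x : F, ∑ i ∈ Finset.range m, (1 - x) ^ i = 0 := by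
    rw [Finset.sum_comm]
    exact Finset.sum_eq_zero fun i hi =>
      sum_one_sub_pow_eq_zero ((Finset.mem_range.1 hi).trans hmF)
  simp_rw [geom, Finset.sum_add_distrib, Finset.sum_sub_distrib, sum_inv_eq_zero (F := F) (by lia),
    geom_sum]
  simp

theorem sum_inv_mul_self : ∑ x : F, x⁻¹ * x = -1 := by
  classical
  have h (x : F) : x⁻¹ * x = 1 - if x = 0 then 1 else 0 := by
    rcases eq_or_ne x 0 with rfl | hx <;> simp [*]
  simp_rw [h, Finset.sum_sub_distrib]
  simp

theorem sum_inv_mul_pow_eq_zero {m : ℕ} (hm : 1 < m) (hmF : m < Fintype.card F) :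
    ∑ x : F, x⁻¹ * x ^ m = 0 := by
  rw [← FiniteField.sum_pow_lt_card_sub_one F (m - 1) (by lia)]
  refine Finset.sum_congr rfl fun x _ => ?_
  rcases eq_or_ne x 0 with rfl | hx
  · rw [inv_zero, zero_mul, zero_pow (by lia)]
  · rw [inv_mul_eq_iff_eq_mul₀ hx, mul_pow_sub_one (by lia)]

theorem sum_inv_mul_algebraMap_trace (K : Type*) [Field K] [Finite K] [Algebra K F] :
    ∑ x : F, x⁻¹ * algebraMap K F (Algebra.trace K F x) = -1 := by
  have hK : 1 < Nat.card K := Finite.one_lt_card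
  have hF : Fintype.card F = Nat.card K ^ Module.finrank K F := by
    rw [← Nat.card_eq_fintype_card, Module.natCard_eq_pow_finrank (K := K)]
  simp_rw [FiniteField.algebraMap_trace_eq_sum_pow, Finset.mul_sum]
  rw [Finset.sum_comm, Finset.sum_eq_single_of_mem 0 (Finset.mem_range.2 Module.finrank_pos)]
  · simpa using sum_inv_mul_self
  · intro i hi hi0
    refine sum_inv_mul_pow_eq_zero (Nat.one_lt_pow hi0 hK) ?_
    rw [hF]
    exact Nat.pow_lt_pow_right hK (Finset.mem_range.1 hi)

end PowerSums

theorem trace_pow_card {K L : Type*} [Field K] [Fintype K] [Field L] [Algebra K L]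
    [Algebra.IsAlgebraic K L] (x : L) :
    Algebra.trace K L (x ^ Fintype.card K) = Algebra.trace K L x := by
  simpa using Algebra.trace_eq_of_algEquiv (FiniteField.frobeniusAlgEquivOfAlgebraic K L) x

theorem gaussSum_pow_of_bijective_pow {F R : Type*} [CommRing F] [Fintype F] [CommRing R] {m : ℕ}
    (hm₀ : m ≠ 0) (hm : Function.Bijective fun x : F => x ^ m) (χ : MulChar F R) {ψ : AddChar F R}
    (hψ : ∀ x, ψ (x ^ m) = ψ x) : gaussSum (χ ^ m) ψ = gaussSum χ ψ :=
  Fintype.sum_bijective _ hm _ _ fun x => by rw [MulChar.pow_apply' χ hm₀, hψ, map_pow]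

section TraceSignChar

variable (F R : Type*) [Field F] [Algebra (ZMod 2) F] [CommRing R]

/-- The canonical additive character `x ↦ (-1) ^ Tr x` of a field `F` of characteristic two, with
values in an arbitrary commutative ring `R`. -/
noncomputable def traceSignChar : AddChar F R :=
  (AddChar.zmodChar 2 (neg_one_sq (R := R))).compAddMonoidHom
    (Algebra.trace (ZMod 2) F).toAddMonoidHom

variable {F}

theorem traceSignChar_apply (x : F) :
    traceSignChar F R x = (-1) ^ (Algebra.trace (ZMod 2) F x).val := rfl

theorem traceSignChar_eq_one_sub (x : F) :
    traceSignChar F R x = 1 - 2 * ((Algebra.trace (ZMod 2) F x).val : R) := by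
  rw [traceSignChar_apply]
  generalize Algebra.trace (ZMod 2) F x = t
  obtain rfl | rfl : t = 0 ∨ t = 1 := by revert t; decide
  · simp
  · rw [ZMod.val_one]
    norm_num

variable {R}

theorem gaussSum_pow_two_mul_traceSignChar [Fintype F] (χ : MulChar F R) (j : ℕ) :
    gaussSum (χ ^ (2 * j)) (traceSignChar F R) = gaussSum (χ ^ j) (traceSignChar F R) := by
  rw [mul_comm, pow_mul]
  refine gaussSum_pow_of_bijective_pow two_ne_zero ?_ _ fun x => ?_
  · simpa using (FiniteField.frobeniusAlgEquivOfAlgebraic (ZMod 2) F).bijective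
  · rw [traceSignChar_apply, traceSignChar_apply, ← trace_pow_card x, ZMod.card]

theorem neg_gaussSum_traceSignChar [Fintype F] [IsDomain R] {χ : MulChar F R} (hχ : χ ≠ 1) :
    -gaussSum χ (traceSignChar F R) =
      2 * ∑ x, χ x * ((Algebra.trace (ZMod 2) F x).val : R) := by
  simp_rw [gaussSum, traceSignChar_eq_one_sub, mul_sub, mul_one, mul_left_comm _ (2 : R),
    Finset.sum_sub_distrib, ← Finset.mul_sum, MulChar.sum_eq_zero_of_ne_one hχ, zero_sub, neg_neg]

end TraceSignChar

theorem exists_map_eq_one_and_eq_mul {M N G : Type*} [CommMonoid M] [Monoid N] [FunLike G M N]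
    [MonoidHomClass G M N] {f : G} [IsLocalHom f] {a b c v : M} (ha : f a = 1) (hv : f v = 1)
    (h : b * a = c * v) : ∃ u, f u = 1 ∧ b = c * u := by
  obtain ⟨a, rfl⟩ : IsUnit a := isUnit_of_map_unit f a (ha ▸ isUnit_one)
  refine ⟨v * ↑a⁻¹, ?_, by rw [← mul_assoc, ← h, Units.mul_inv_cancel_right]⟩
  rw [map_mul, hv, one_mul, ← map_one f, ← Units.mul_inv a, map_mul, ha, one_mul]

section InverseLift

variable {F R : Type*} [Field F] [Fintype F] [CommRing R] {π : R →+* F} {χ : MulChar F R}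

theorem pow_ne_one_of_map_eq_inv (hχ : ∀ x, π (χ x) = x⁻¹) {j : ℕ} (hj : 0 < j)
    (hjF : j < Fintype.card F - 1) : χ ^ j ≠ 1 := by
  intro h
  refine hjF.not_ge (Nat.le_of_dvd hj ((FiniteField.forall_pow_eq_one_iff F j).1 fun x => ?_))
  have hx := congrArg π (DFunLike.congr_fun h (x : F))
  rw [MulChar.pow_apply_coe, MulChar.one_apply_coe, map_pow, hχ, map_one, inv_pow,
    inv_eq_one] at hx
  exact Units.ext (by rwa [Units.val_pow_eq_pow_val])

theorem map_jacobiSum_pow_of_map_eq_inv (hχ : ∀ x, π (χ x) = x⁻¹) {m : ℕ} (hm : 0 < m)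
    (hmF : m < Fintype.card F - 1) : π (jacobiSum χ (χ ^ m)) = -(m + 1) := by
  simp_rw [jacobiSum, map_sum, map_mul, MulChar.pow_apply' _ hm.ne', map_pow, hχ,
    inv_pow_eq_pow_card_sub_one_sub hm hmF,
    sum_inv_mul_one_sub_pow (F := F) (Nat.sub_pos_of_lt hmF) (Nat.sub_lt_self hm hmF.le)]
  rw [Nat.cast_sub hmF.le, Nat.cast_sub Fintype.card_pos, FiniteField.cast_card_eq_zero]
  push_cast
  ring

theorem map_sum_mul_val_trace_of_map_eq_inv [Algebra (ZMod 2) F] (hχ : ∀ x, π (χ x) = x⁻¹) :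
    π (∑ x, χ x * ((Algebra.trace (ZMod 2) F x).val : R)) = 1 := by
  simp_rw [map_sum, map_mul, map_natCast, hχ, ← map_natCast (algebraMap (ZMod 2) F),
    ZMod.natCast_zmod_val, sum_inv_mul_algebraMap_trace, ZModModule.neg_eq_self]

variable [IsDomain R] [IsLocalHom π] [Algebra (ZMod 2) F]

theorem exists_neg_gaussSum_pow_succ_eq (hχ : ∀ x, π (χ x) = x⁻¹) {m : ℕ} (hm : 0 < m)
    (hm_even : Even m) (hmF : m + 1 < Fintype.card F - 1) {c u : R} (hu : π u = 1)
    (hc : -gaussSum (χ ^ m) (traceSignChar F R) = c * u) :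
    ∃ v, π v = 1 ∧ -gaussSum (χ ^ (m + 1)) (traceSignChar F R) = 2 * c * v := by
  set T := ∑ x, χ x * ((Algebra.trace (ZMod 2) F x).val : R)
  have hχ₁ : χ ≠ 1 := by simpa using pow_ne_one_of_map_eq_inv hχ one_pos (by lia)
  have hχm : χ * χ ^ m ≠ 1 := pow_succ' χ m ▸ pow_ne_one_of_map_eq_inv hχ m.succ_pos hmF
  have hJ : π (-jacobiSum χ (χ ^ m)) = 1 := by
    rw [map_neg, map_jacobiSum_pow_of_map_eq_inv hχ hm (by lia), neg_neg,
      ← map_natCast (algebraMap (ZMod 2) F), ZMod.natCast_eq_zero_iff_even.2 hm_even, map_zero,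
      zero_add]
  have hTu : π (T * u) = 1 := by
    rw [map_mul, map_sum_mul_val_trace_of_map_eq_inv hχ, hu, one_mul]
  refine exists_map_eq_one_and_eq_mul hJ hTu ?_
  calc -gaussSum (χ ^ (m + 1)) (traceSignChar F R) * -jacobiSum χ (χ ^ m)
      = -gaussSum χ (traceSignChar F R) * -gaussSum (χ ^ m) (traceSignChar F R) := by
        rw [neg_mul_neg, neg_mul_neg, pow_succ', jacobiSum_mul_nontrivial hχm]
    _ = 2 * c * (T * u) := by
        rw [neg_gaussSum_traceSignChar hχ₁, hc]
        ring

theorem exists_neg_gaussSum_pow_eq_two_pow_mul (hχ : ∀ x, π (χ x) = x⁻¹) {j : ℕ} (hj : 0 < j)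
    (hjF : j < Fintype.card F - 1) :
    ∃ u, π u = 1 ∧
      -gaussSum (χ ^ j) (traceSignChar F R) = 2 ^ (Nat.digits 2 j).sum * u := by
  induction j using Nat.strong_induction_on with
  | _ j ih =>
  obtain ⟨k, rfl | rfl⟩ := Nat.even_or_odd' j
  · have hdigits : (Nat.digits 2 (2 * k)).sum = (Nat.digits 2 k).sum := by
      simpa using sum_digits_add_base_mul one_lt_two two_pos k
    rw [gaussSum_pow_two_mul_traceSignChar, hdigits]
    exact ih k (by lia) (by lia) (by lia)
  · rcases k.eq_zero_or_pos with rfl | hk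
    · have hχ₁ := pow_ne_one_of_map_eq_inv hχ hj hjF
      exact ⟨_, map_sum_mul_val_trace_of_map_eq_inv hχ,
        by simpa using neg_gaussSum_traceSignChar hχ₁⟩
    · obtain ⟨u, hu, hk_eq⟩ := ih k (by lia) hk (by lia)
      rw [← gaussSum_pow_two_mul_traceSignChar] at hk_eq
      have hdigits : (Nat.digits 2 (2 * k + 1)).sum = (Nat.digits 2 k).sum + 1 := by
        simpa only [add_comm] using sum_digits_add_base_mul one_lt_two one_lt_two k
      rw [hdigits, pow_succ' (2 : R)]
      exact exists_neg_gaussSum_pow_succ_eq hχ (by lia) (even_two_mul k) hjF hu hk_eq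

end InverseLift

theorem gaussSum_eq_sum_units {F R : Type*} [CommRing F] [Fintype F] [DecidableEq F] [CommRing R]
    (χ : MulChar F R) (ψ : AddChar F R) : gaussSum χ ψ = ∑ x : Fˣ, χ x * ψ x := by
  refine (Fintype.sum_of_injective _ Units.val_injective _ _ (fun x hx => ?_) fun _ => rfl).symm
  rw [MulChar.map_nonunit _ hx, zero_mul]

theorem isLocalHom_constantCoeff (p : ℕ) [Fact p.Prime] (k : Type*) [Field k] [CharP k p] :
    IsLocalHom (constantCoeff : WittVector p k →+* k) :=
  ⟨fun a ha => isUnit_of_coeff_zero_ne_zero a ha.ne_zero⟩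

theorem pow_succ_dvd_pow_mul_sub_pow {p : ℕ} [Fact p.Prime] {k : Type*} [CommRing k] [CharP k p]
    [PerfectRing k p] {u : WittVector p k} (hu : constantCoeff u = 1) (m : ℕ) :
    (p : WittVector p k) ^ (m + 1) ∣ p ^ m * u - p ^ m := by
  have h : u - 1 ∈ Ideal.span {(p : WittVector p k)} := by
    rw [mem_span_p_iff_coeff_zero_eq_zero, ← constantCoeff_apply, map_sub, hu, map_one, sub_self]
  rw [pow_succ, ← mul_sub_one]
  exact mul_dvd_mul_left _ (Ideal.mem_span_singleton.1 h)

/-- In the classical case `R` is the ring of integers of `ℚ₂(ξ)`, `π` the reduction modulo `2` and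
`ω` the Teichmüller character; as `ker π = (2)`, the factor `u` is then a unit `≡ 1 (mod 2)`. -/
theorem gauss_sum_two_adic_valuation_general {F R : Type*} [Field F] [Fintype F] [DecidableEq F]
    [Algebra (ZMod 2) F] [CommRing R] [IsDomain R] (π : R →+* F) [IsLocalHom π]
    (ω : Fˣ →* R) (hω : ∀ x, π (ω x) = x) {j : ℕ} (hj : 1 ≤ j) (hjF : j < Fintype.card F - 1) :
    ∃ u, π u = 1 ∧ -∑ x : Fˣ, ω x⁻¹ ^ j * (-1) ^ (Algebra.trace (ZMod 2) F x).val =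
      2 ^ (Nat.digits 2 j).sum * u := by
  set χ : MulChar F R := (MulChar.ofUnitHom ω.toHomUnits)⁻¹
  have hχω (x : Fˣ) : χ x = ω x⁻¹ := by
    rw [MulChar.inv_apply', ← Units.val_inv_eq_inv_val, MulChar.ofUnitHom_coe,
      MonoidHom.coe_toHomUnits]
  have hχ (x : F) : π (χ x) = x⁻¹ := by
    rcases eq_or_ne x 0 with rfl | hx
    · rw [MulChar.map_zero, map_zero, inv_zero]
    · lift x to Fˣ using hx.isUnit
      rw [hχω, hω, Units.val_inv_eq_inv_val]
  simpa only [gaussSum_eq_sum_units, MulChar.pow_apply_coe, hχω, traceSignChar_apply]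
    using exists_neg_gaussSum_pow_eq_two_pow_mul hχ hj hjF

/-- For `q = 2^n` and `1 ≤ j < q - 1`, the Gauss sum
`g(j) = -Σ_{x ∈ F_q^×} ω(x)^{-j} (-1)^{Tr(x)}` (with values in the ring of
integers `𝕎(F_q)` of `ℚ₂(ξ)`, `ω` the Teichmüller character) satisfies
`g(j) ≡ 2^{wt₂(j)} (mod 2^{wt₂(j)+1})`. -/
theorem gauss_sum_two_adic_valuation (n : ℕ) (hn : 1 ≤ n)
    (F : Type*) [Field F] [Fintype F] [DecidableEq F] [CharP F 2] [Algebra (ZMod 2) F]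
    (hcard : Fintype.card F = 2 ^ n)
    (j : ℕ) (hj1 : 1 ≤ j) (hj2 : j < 2 ^ n - 1) :
    (2 ^ ((Nat.digits 2 j).sum + 1) : WittVector 2 F) ∣
      (- ∑ x : Fˣ, (WittVector.teichmuller 2 ((x⁻¹ : Fˣ) : F)) ^ j
          * (-1) ^ (Algebra.trace (ZMod 2) F x).val)
        - 2 ^ ((Nat.digits 2 j).sum) := by
  have := isLocalHom_constantCoeff 2 F
  obtain ⟨u, hu, h⟩ := gauss_sum_two_adic_valuation_general constantCoeff
    ((teichmuller 2).comp (Units.coeHom F)) (fun x => teichmuller_coeff_zero 2 (x : F)) hj1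
    (hcard ▸ hj2)
  have hdvd := pow_succ_dvd_pow_mul_sub_pow hu (Nat.digits 2 j).sum
  rw [Nat.cast_ofNat, ← h] at hdvd
  exact hdvd
end

section
/- Let q = 2^n with n ≥ 3 and let g(1) = τ(ω^{-1}) be the Gauss sum of the inverse Teichmüller character over F_q. Then g(1) ≡ 6 (mod 16) and g(1)² ≡ 36 (mod 64), as congruences in the ring of integers of ℚ_2(ξ). -/
/-!
Let `S x = ∑ i < n, ω(x) ^ 2 ^ i` be the trace to `ℤ₂` of the Teichmüller lift of `x ∈ F_q`. It
reduces to `Tr x` modulo `2`, so `(-1) ^ Tr x = (1 - 2) ^ S x`, and expanding the binomial series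
gives `3 (-1) ^ Tr x ≡ 3 - 4 S + 2 S² - 4 S³ (mod 16)`. By orthogonality of characters,
`∑ x, ω(x)⁻¹ (S x) ^ k` is `q - 1` times the number of ways to write `1` modulo `q - 1` as an
ordered sum of `k` of the powers `2 ^ i`, `i < n`; this number is `0, 1, 1, 3` for `k = 0, 1, 2, 3`.
Hence `3 g(1) ≡ 14 (q - 1) (mod 16)`, and `8 ∣ q`.
-/

open Finset
open Module (finrank)
open WittVector (teichmuller)

section CharacterSums

variable {G R : Type*} [CommRing R] [IsDomain R]

theorem forall_pow_eq_pow_iff_modEq_card [Group G] [Fintype G] [IsCyclic G] {a m : ℕ} :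
    (∀ x : G, x ^ m = x ^ a) ↔ m ≡ a [MOD Fintype.card G] := by
  refine ⟨fun h => ?_, fun h x => pow_eq_pow_iff_modEq.2 (h.of_dvd orderOf_dvd_card)⟩
  obtain ⟨g, hg⟩ := IsCyclic.exists_ofOrder_eq_natCard (α := G)
  rw [← Nat.card_eq_fintype_card, ← hg]
  exact pow_eq_pow_iff_modEq.1 (h g)

variable [CommGroup G] [Fintype G] {χ : G →* R}

theorem sum_inv_pow_mul_pow_of_injective (hχ : Function.Injective χ) (a m : ℕ) :
    ∑ x, χ x⁻¹ ^ a * χ x ^ m =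
      if m ≡ a [MOD Fintype.card G] then (Fintype.card G : R) else 0 := by
  classical
  have : IsCyclic G := isCyclic_of_injective_ringHom χ hχ
  let φ : G →* R := χ.comp (invMonoidHom ^ a * powMonoidHom m)
  have hφ : φ = 1 ↔ m ≡ a [MOD Fintype.card G] := by
    simp only [← forall_pow_eq_pow_iff_modEq_card, DFunLike.ext_iff, φ, MonoidHom.comp_apply,
      MonoidHom.one_apply, map_eq_one_iff χ hχ, MonoidHom.mul_apply, MonoidHom.pow_apply,
      invMonoidHom_apply, powMonoidHom_apply, inv_pow, inv_mul_eq_one, eq_comm]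
  calc ∑ x, χ x⁻¹ ^ a * χ x ^ m = ∑ x, φ x := by
          simp only [φ, MonoidHom.comp_apply, MonoidHom.mul_apply, MonoidHom.pow_apply,
            invMonoidHom_apply, powMonoidHom_apply, map_mul, map_pow]
    _ = if m ≡ a [MOD Fintype.card G] then (Fintype.card G : R) else 0 := by
          simp only [sum_hom_units φ, hφ, Nat.cast_ite, Nat.cast_zero]

theorem sum_inv_pow_mul_sum_pow_pow_of_injective {ι : Type*} (hχ : Function.Injective χ)
    (a k : ℕ) (s : Finset ι) (e : ι → ℕ) :
    ∑ x, χ x⁻¹ ^ a * (∑ i ∈ s, χ x ^ e i) ^ k = Fintype.card G *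
      #{f ∈ Fintype.piFinset fun _ : Fin k => s | ∑ j, e (f j) ≡ a [MOD Fintype.card G]} := by
  simp_rw [sum_pow', prod_pow_eq_pow_sum, mul_sum]
  rw [sum_comm]
  simp_rw [sum_inv_pow_mul_pow_of_injective hχ]
  rw [← sum_filter, sum_const, nsmul_eq_mul, mul_comm]

end CharacterSums

section PowersOfTwo

theorem modEq_one_iff_eq_one_or_eq_succ {N m : ℕ} (hm : 1 ≤ m) (hmN : m ≤ 2 * N) :
    m ≡ 1 [MOD N] ↔ m = 1 ∨ m = N + 1 := by
  refine ⟨fun h => ?_, ?_⟩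
  · obtain ⟨c, hc⟩ := (Nat.modEq_iff_dvd' hm).1 h.symm
    have hc2 : c < 2 := by
      by_contra! h2
      have := Nat.mul_le_mul_left N h2
      omega
    interval_cases c <;> omega
  · rintro (rfl | rfl)
    · rfl
    · exact Nat.add_modEq_left

theorem two_pow_eq_half_or_eq_quarter_or_le_eighth {i n : ℕ} (h : i < n) :
    (i + 1 = n ∧ 2 * 2 ^ i = 2 ^ n) ∨ (i + 2 = n ∧ 4 * 2 ^ i = 2 ^ n) ∨
      (i + 3 ≤ n ∧ 8 * 2 ^ i ≤ 2 ^ n) := by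
  obtain rfl | rfl | h3 : i + 1 = n ∨ i + 2 = n ∨ i + 3 ≤ n := by omega
  · exact .inl ⟨rfl, by ring⟩
  · exact .inr (.inl ⟨rfl, by ring⟩)
  · refine .inr (.inr ⟨h3, ?_⟩)
    calc 8 * 2 ^ i = 2 ^ (i + 3) := by ring
      _ ≤ 2 ^ n := Nat.pow_le_pow_right two_pos h3

theorem two_pow_add_two_pow_eq_two_pow_iff {i j n : ℕ} :
    2 ^ i + 2 ^ j = 2 ^ n ↔ i + 1 = n ∧ j + 1 = n := by
  refine ⟨fun h => ?_, ?_⟩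
  · have hi : i < n := (Nat.pow_lt_pow_iff_right one_lt_two).1 (by have := Nat.two_pow_pos j; omega)
    have hj : j < n := (Nat.pow_lt_pow_iff_right one_lt_two).1 (by have := Nat.two_pow_pos i; omega)
    have hi' := two_pow_eq_half_or_eq_quarter_or_le_eighth hi
    have hj' := two_pow_eq_half_or_eq_quarter_or_le_eighth hj
    have := Nat.two_pow_pos n
    omega
  · rintro ⟨rfl, hj⟩
    obtain rfl : j = i := by omega
    ring

theorem two_pow_add_two_pow_add_two_pow_eq_two_pow_iff {i j k n : ℕ} :
    2 ^ i + 2 ^ j + 2 ^ k = 2 ^ n ↔ (i + 1 = n ∧ j + 2 = n ∧ k + 2 = n) ∨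
      (i + 2 = n ∧ j + 1 = n ∧ k + 2 = n) ∨ (i + 2 = n ∧ j + 2 = n ∧ k + 1 = n) := by
  have hi0 := Nat.two_pow_pos i
  have hj0 := Nat.two_pow_pos j
  have hk0 := Nat.two_pow_pos k
  refine ⟨fun h => ?_, fun h => ?_⟩
  · have hi := two_pow_eq_half_or_eq_quarter_or_le_eighth
      ((Nat.pow_lt_pow_iff_right one_lt_two).1 (by omega : 2 ^ i < 2 ^ n))
    have hj := two_pow_eq_half_or_eq_quarter_or_le_eighth
      ((Nat.pow_lt_pow_iff_right one_lt_two).1 (by omega : 2 ^ j < 2 ^ n))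
    have hk := two_pow_eq_half_or_eq_quarter_or_le_eighth
      ((Nat.pow_lt_pow_iff_right one_lt_two).1 (by omega : 2 ^ k < 2 ^ n))
    omega
  · have hi := two_pow_eq_half_or_eq_quarter_or_le_eighth (by omega : i < n)
    have hj := two_pow_eq_half_or_eq_quarter_or_le_eighth (by omega : j < n)
    have hk := two_pow_eq_half_or_eq_quarter_or_le_eighth (by omega : k < n)
    omega

/-- The number of ways to write `1` modulo `2 ^ n - 1` as an ordered sum of `k` of the powers
`2 ^ i`, `i < n`. -/
def binaryRepCount (n k : ℕ) : ℕ :=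
  #{f ∈ Fintype.piFinset fun _ : Fin k => range n | ∑ j, 2 ^ f j ≡ 1 [MOD 2 ^ n - 1]}

theorem sum_two_pow_modEq_one_iff {n k : ℕ} (hn : 2 ≤ n) (hk : 1 ≤ k) (hk3 : k ≤ 3)
    {f : Fin k → ℕ} (hf : ∀ j, f j < n) :
    ∑ j, 2 ^ f j ≡ 1 [MOD 2 ^ n - 1] ↔ ∑ j, 2 ^ f j = 1 ∨ ∑ j, 2 ^ f j = 2 ^ n := by
  obtain ⟨m, rfl⟩ : ∃ m, n = m + 2 := ⟨n - 2, by omega⟩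
  have hpow : 2 ^ (m + 2) = 2 * 2 ^ (m + 1) := by ring
  have hm : 2 ≤ 2 ^ (m + 1) := Nat.le_self_pow (by omega) 2
  have hlower : k ≤ ∑ j, 2 ^ f j := by
    simpa using card_nsmul_le_sum univ (fun j => 2 ^ f j) 1 fun j _ => Nat.one_le_two_pow
  have hupper : ∑ j, 2 ^ f j ≤ 3 * 2 ^ (m + 1) :=
    calc ∑ j, 2 ^ f j ≤ k * 2 ^ (m + 1) := by
          simpa using sum_le_card_nsmul univ (fun j => 2 ^ f j) (2 ^ (m + 1)) fun j _ =>
            Nat.pow_le_pow_right two_pos (Nat.le_of_lt_succ (hf j))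
      _ ≤ 3 * 2 ^ (m + 1) := Nat.mul_le_mul_right _ hk3
  rw [modEq_one_iff_eq_one_or_eq_succ (by omega) (by omega), Nat.sub_add_cancel (by omega)]

variable {n : ℕ}

theorem binaryRepCount_zero (hn : 2 ≤ n) : binaryRepCount n 0 = 0 := by
  have hpow : 2 ^ 2 ≤ 2 ^ n := Nat.pow_le_pow_right two_pos hn
  rw [binaryRepCount, card_eq_zero, filter_eq_empty_iff]
  intro f _ h
  rw [univ_eq_empty, sum_empty] at h
  have hle : 2 ^ n - 1 ≤ 1 := Nat.le_of_dvd one_pos ((Nat.modEq_iff_dvd' zero_le_one).1 h)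
  omega

theorem binaryRepCount_one (hn : 2 ≤ n) : binaryRepCount n 1 = 1 := by
  rw [binaryRepCount, card_eq_one]
  refine ⟨![0], ext fun f => ?_⟩
  simp only [mem_filter, Fintype.mem_piFinset, mem_range, mem_singleton, funext_iff]
  rw [and_congr_right fun hf => sum_two_pow_modEq_one_iff hn le_rfl (by norm_num) hf]
  simp only [Fin.forall_fin_one, Fin.sum_univ_one, Matrix.cons_val_zero, Nat.pow_eq_one,
    Nat.pow_right_inj one_lt_two]
  omega

theorem binaryRepCount_two (hn : 2 ≤ n) : binaryRepCount n 2 = 1 := by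
  rw [binaryRepCount, card_eq_one]
  refine ⟨![n - 1, n - 1], ext fun f => ?_⟩
  simp only [mem_filter, Fintype.mem_piFinset, mem_range, mem_singleton, funext_iff]
  rw [and_congr_right fun hf => sum_two_pow_modEq_one_iff hn (by norm_num) (by norm_num) hf]
  have h0 := Nat.two_pow_pos (f 0)
  have h1 := Nat.two_pow_pos (f 1)
  simp only [Fin.forall_fin_two, Fin.sum_univ_two, Matrix.cons_val_zero, Matrix.cons_val_one,
    two_pow_add_two_pow_eq_two_pow_iff]
  omega

theorem binaryRepCount_three (hn : 2 ≤ n) : binaryRepCount n 3 = 3 := by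
  rw [binaryRepCount, card_eq_three]
  have hne : n - 1 ≠ n - 2 := by omega
  refine ⟨![n - 1, n - 2, n - 2], ![n - 2, n - 1, n - 2], ![n - 2, n - 2, n - 1], by simp [hne],
    by simp [hne], by simp [hne.symm], ext fun f => ?_⟩
  simp only [mem_filter, Fintype.mem_piFinset, mem_range, mem_insert, mem_singleton, funext_iff]
  rw [and_congr_right fun hf => sum_two_pow_modEq_one_iff hn (by norm_num) le_rfl hf]
  have h0 := Nat.two_pow_pos (f 0)
  have h1 := Nat.two_pow_pos (f 1)
  have h2 := Nat.two_pow_pos (f 2)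
  simp only [Fin.forall_fin_succ, Fin.succ_zero_eq_one, Fin.succ_one_eq_two, IsEmpty.forall_iff,
    and_true, Fin.sum_univ_three, Matrix.cons_val,
    two_pow_add_two_pow_add_two_pow_eq_two_pow_iff]
  omega

end PowersOfTwo

section TeichmullerTrace

variable {p : ℕ} [Fact p.Prime]

theorem injective_teichmuller (p : ℕ) [Fact p.Prime] (R : Type*) [CommRing R] :
    Function.Injective (teichmuller p : R → WittVector p R) := fun x y h => by
  simpa only [WittVector.teichmuller_coeff_zero] using congrArg (WittVector.coeff · 0) h

theorem frobenius_teichmuller {R : Type*} [CommRing R] [CharP R p] (x : R) :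
    WittVector.frobenius (teichmuller p x) = teichmuller p x ^ p := by
  rw [WittVector.frobenius_eq_map_frobenius, WittVector.map_teichmuller, frobenius_def, map_pow]

variable {F : Type*} [Field F]

theorem mem_range_map_castHom_of_frobenius_eq [CharP F p] {s : WittVector p F}
    (hs : WittVector.frobenius s = s) :
    s ∈ (WittVector.map (p := p) (ZMod.castHom dvd_rfl F)).range := by
  have hcoeff (i : ℕ) : s.coeff i ∈ (ZMod.castHom (m := p) dvd_rfl F).fieldRange := by
    rw [ZMod.fieldRange_castHom_eq_bot, Subfield.mem_bot_iff_pow_eq_self F p,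
      ← WittVector.coeff_frobenius_charP, hs]
  choose c hc using hcoeff
  exact ⟨WittVector.mk p c, WittVector.ext fun i => (WittVector.map_coeff _ _ i).trans (hc i)⟩

theorem exists_pow_dvd_sub_natCast_of_frobenius_eq [CharP F p] {s : WittVector p F}
    (hs : WittVector.frobenius s = s) (k : ℕ) :
    ∃ N : ℕ, (p : WittVector p F) ^ k ∣ s - N := by
  obtain ⟨w, rfl⟩ := mem_range_map_castHom_of_frobenius_eq hs
  let z : ℤ_[p] := WittVector.equiv p w
  let φ : ℤ_[p] →+* WittVector p F :=
    (WittVector.map (ZMod.castHom dvd_rfl F)).comp (WittVector.equiv p).symm.toRingHom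
  have hz : φ z = WittVector.map (ZMod.castHom dvd_rfl F) w := by simp [φ, z]
  refine ⟨z.appr k, ?_⟩
  simpa [hz] using map_dvd φ (Ideal.mem_span_singleton.1 (PadicInt.appr_spec k z))

/-- The trace to `ℤ_p` of the Teichmüller lift of an element of a finite field, as a sum over the
Galois conjugates in the Witt vectors. -/
noncomputable def teichmullerTrace (p : ℕ) [Fact p.Prime] {F : Type*} [Field F]
    [Algebra (ZMod p) F] (x : F) : WittVector p F :=
  ∑ i ∈ range (finrank (ZMod p) F), teichmuller p x ^ p ^ i

variable [Algebra (ZMod p) F] [Finite F]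

theorem frobenius_teichmullerTrace (x : F) :
    WittVector.frobenius (teichmullerTrace p x) = teichmullerTrace p x := by
  have : CharP F p := charP_of_injective_algebraMap (algebraMap (ZMod p) F).injective p
  have hcycle : teichmuller p x ^ p ^ finrank (ZMod p) F = teichmuller p x ^ p ^ 0 := by
    have := Fintype.ofFinite F
    have hcard : Fintype.card F = p ^ finrank (ZMod p) F := by
      rw [Module.card_eq_pow_finrank (K := ZMod p), ZMod.card]
    rw [pow_zero, pow_one, ← map_pow, ← hcard, FiniteField.pow_card]
  simp_rw [teichmullerTrace, map_sum, map_pow, frobenius_teichmuller, ← pow_mul, ← pow_succ']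
  refine add_right_cancel (b := teichmuller p x ^ p ^ 0) ?_
  rw [← sum_range_succ' (fun i => teichmuller p x ^ p ^ i), sum_range_succ, hcycle]

theorem constantCoeff_teichmullerTrace (x : F) :
    WittVector.constantCoeff (teichmullerTrace p x) =
      algebraMap (ZMod p) F (Algebra.trace (ZMod p) F x) := by
  simp_rw [FiniteField.algebraMap_trace_eq_sum_pow, Nat.card_zmod, teichmullerTrace, map_sum,
    map_pow]
  exact sum_congr rfl fun i _ => congrArg (· ^ p ^ i) (WittVector.teichmuller_coeff_zero p x)

theorem exists_pow_dvd_teichmullerTrace_sub_natCast (x : F) {k : ℕ} (hk : k ≠ 0) :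
    ∃ N : ℕ, (N : ZMod p) = Algebra.trace (ZMod p) F x ∧
      (p : WittVector p F) ^ k ∣ teichmullerTrace p x - N := by
  have : CharP F p := charP_of_injective_algebraMap (algebraMap (ZMod p) F).injective p
  obtain ⟨N, hN⟩ :=
    exists_pow_dvd_sub_natCast_of_frobenius_eq (frobenius_teichmullerTrace (p := p) x) k
  refine ⟨N, (algebraMap (ZMod p) F).injective ?_, hN⟩
  have h := map_dvd WittVector.constantCoeff hN
  rw [map_pow, map_natCast, CharP.cast_eq_zero, zero_pow hk, zero_dvd_iff, map_sub, map_natCast,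
    constantCoeff_teichmullerTrace, sub_eq_zero] at h
  rw [map_natCast, h]

end TeichmullerTrace

section GaussSum

/- The cubic is three times the truncation modulo `16` of the binomial series
`(1 - 2) ^ s = ∑ k, s.choose k * (-2) ^ k`; the factor `3` clears the denominator of `k = 3`. -/
theorem sixteen_dvd_three_mul_neg_one_pow_sub {R : Type*} [CommRing R] {s : R} {N : ℕ}
    (h : (16 : R) ∣ s - N) : (16 : R) ∣ 3 * (-1) ^ N - (3 - 4 * s + 2 * s ^ 2 - 4 * s ^ 3) := by
  have hcongr : (16 : R) ∣ (3 - 4 * (N : R) + 2 * N ^ 2 - 4 * N ^ 3) -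
      (3 - 4 * s + 2 * s ^ 2 - 4 * s ^ 3) :=
    h.trans ⟨4 - 2 * (s + N) + 4 * (s ^ 2 + s * N + N ^ 2), by ring⟩
  have hnat : (16 : R) ∣ 3 * (-1) ^ N - (3 - 4 * (N : R) + 2 * N ^ 2 - 4 * N ^ 3) := by
    obtain ⟨a, ha⟩ := N.even_or_odd'
    obtain ⟨b, hb⟩ := Nat.even_mul_succ_self a
    have hbR : (a : R) * (a + 1) = b + b := mod_cast congrArg (Nat.cast (R := R)) hb
    rcases ha with rfl | rfl
    · rw [(even_two_mul a).neg_one_pow]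
      push_cast
      exact ⟨a - b + 2 * a ^ 3, by linear_combination -8 * hbR⟩
    · rw [(odd_two_mul_add_one a).neg_one_pow]
      push_cast
      exact ⟨b + a + 2 * a ^ 2 + 2 * a ^ 3, by linear_combination 8 * hbR⟩
  simpa using dvd_add hnat hcongr

variable {F : Type*} [Field F] [Algebra (ZMod 2) F]

theorem sixteen_dvd_three_mul_neg_one_pow_trace_sub [Finite F] (x : F) :
    (16 : WittVector 2 F) ∣ 3 * (-1) ^ (Algebra.trace (ZMod 2) F x).val -
      (3 - 4 * teichmullerTrace 2 x + 2 * teichmullerTrace 2 x ^ 2 -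
        4 * teichmullerTrace 2 x ^ 3) := by
  obtain ⟨N, hN, hdvd⟩ := exists_pow_dvd_teichmullerTrace_sub_natCast (p := 2) x four_ne_zero
  have h16 : ((2 : ℕ) : WittVector 2 F) ^ 4 = 16 := by norm_num
  rw [← hN, ZMod.val_natCast, ← neg_one_pow_eq_pow_mod_two]
  exact sixteen_dvd_three_mul_neg_one_pow_sub (h16 ▸ hdvd)

variable [Fintype F] [DecidableEq F]

theorem sum_teichmuller_inv_mul_teichmullerTrace_pow (k : ℕ) :
    ∑ x : Fˣ, teichmuller 2 ((x⁻¹ : Fˣ) : F) * teichmullerTrace 2 (x : F) ^ k =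
      Fintype.card Fˣ * binaryRepCount (finrank (ZMod 2) F) k := by
  have : CharP F 2 := charP_of_injective_algebraMap (algebraMap (ZMod 2) F).injective 2
  have hcard : Fintype.card Fˣ = 2 ^ finrank (ZMod 2) F - 1 := by
    rw [Fintype.card_units, Module.card_eq_pow_finrank (K := ZMod 2), ZMod.card]
  have h := sum_inv_pow_mul_sum_pow_pow_of_injective
    (χ := (teichmuller 2).comp (Units.coeHom F))
    ((injective_teichmuller 2 F).comp Units.val_injective) 1 k
    (range (finrank (ZMod 2) F)) (2 ^ ·)
  simpa only [pow_one, hcard, MonoidHom.comp_apply, Units.coeHom_apply, teichmullerTrace,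
    binaryRepCount] using h

theorem sixteen_dvd_three_mul_gauss_sum_add (hF : 2 ≤ finrank (ZMod 2) F) :
    (16 : WittVector 2 F) ∣ 3 * ∑ x : Fˣ, teichmuller 2 ((x⁻¹ : Fˣ) : F) *
      (-1) ^ (Algebra.trace (ZMod 2) F x).val + 14 * Fintype.card Fˣ := by
  let ω : Fˣ → WittVector 2 F := fun x => teichmuller 2 ((x⁻¹ : Fˣ) : F)
  let S : Fˣ → WittVector 2 F := fun x => teichmullerTrace 2 (x : F)
  have hmoment (k : ℕ) : ∑ x, ω x * S x ^ k =
      Fintype.card Fˣ * binaryRepCount (finrank (ZMod 2) F) k :=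
    sum_teichmuller_inv_mul_teichmullerTrace_pow k
  have hcubic : ∑ x, ω x * (3 - 4 * S x + 2 * S x ^ 2 - 4 * S x ^ 3) =
      -14 * (Fintype.card Fˣ : WittVector 2 F) :=
    calc ∑ x, ω x * (3 - 4 * S x + 2 * S x ^ 2 - 4 * S x ^ 3)
      _ = 3 * ∑ x, ω x * S x ^ 0 - 4 * ∑ x, ω x * S x ^ 1 + 2 * ∑ x, ω x * S x ^ 2 -
          4 * ∑ x, ω x * S x ^ 3 := by
          simp_rw [mul_sum, ← sum_sub_distrib, ← sum_add_distrib, ← sum_sub_distrib]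
          exact sum_congr rfl fun x _ => by ring
      _ = -14 * (Fintype.card Fˣ : WittVector 2 F) := by
          simp_rw [hmoment, binaryRepCount_zero hF, binaryRepCount_one hF, binaryRepCount_two hF,
            binaryRepCount_three hF]
          push_cast
          ring
  have hdvd := dvd_sum (s := univ) fun (x : Fˣ) _ =>
    (sixteen_dvd_three_mul_neg_one_pow_trace_sub (x : F)).mul_left (ω x)
  simp_rw [mul_sub (ω _) (3 * _), sum_sub_distrib, mul_left_comm (ω _)] at hdvd
  rwa [← mul_sum, hcubic, neg_mul, sub_neg_eq_add] at hdvd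

end GaussSum

/-- For `q = 2^n`, `n ≥ 3`, the Gauss sum `g(1) = τ(ω^{-1})` in the ring of integers
`𝕎(F_q)` of `ℚ₂(ξ)` satisfies `g(1) ≡ 6 (mod 16)` and `g(1)² ≡ 36 (mod 64)`. -/
theorem gauss_sum_one_mod_sixteen (n : ℕ) (hn : 3 ≤ n)
    (F : Type*) [Field F] [Fintype F] [DecidableEq F] [CharP F 2] [Algebra (ZMod 2) F]
    (hcard : Fintype.card F = 2 ^ n)
    (g : WittVector 2 F)
    (hg : g = - ∑ x : Fˣ, WittVector.teichmuller 2 ((x⁻¹ : Fˣ) : F)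
          * (-1) ^ (Algebra.trace (ZMod 2) F x).val) :
    (16 : WittVector 2 F) ∣ g - 6 ∧ (64 : WittVector 2 F) ∣ g ^ 2 - 36 := by
  have : Module.finrank (ZMod 2) F = n := by
    rw [Module.card_eq_pow_finrank (K := ZMod 2), ZMod.card] at hcard
    exact Nat.pow_right_injective le_rfl hcard
  have h16 : (16 : WittVector 2 F) ∣ g - 6 := by
    obtain ⟨c, hc⟩ := sixteen_dvd_three_mul_gauss_sum_add (F := F) (by omega)
    obtain ⟨m, rfl⟩ := Nat.exists_eq_add_of_le hn
    rw [← neg_eq_iff_eq_neg.2 hg, Fintype.card_units, hcard, Nat.cast_sub Nat.one_le_two_pow] at hc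
    push_cast at hc
    -- `11` inverts `3` modulo `16`.
    exact ⟨-11 * c + 77 * 2 ^ m - 2 * g - 10, by linear_combination (-11) * hc⟩
  obtain ⟨c, hc⟩ := h16
  refine ⟨⟨c, hc⟩, 3 * c + 4 * c ^ 2, ?_⟩
  rw [sub_eq_iff_eq_add.1 hc]
  ring
end

section
/- Let n ≥ 6, q = 2^n, and a ∈ F_q. Then K(a) mod 64 is determined by the lifted trace T̂(a) mod 16 via K(a) ≡ -36·T̂(a) - 16·Q̂(a) (mod 64), where 2Q̂(a) = T̂(a)² - T̂(a); in particular, for instance, K(a) ≡ 0 (mod 64) iff T̂(a) ≡ 0 (mod 16), K(a) ≡ 4 (mod 64) iff T̂(a) ≡ 11 (mod 16), and K(a) ≡ 32 (mod 64) iff T̂(a) ≡ 8 (mod 16). -/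
/-!
Let `s(x) = (-1) ^ Tr(x)`. For `a ≠ 0`, `K(a) - 1` is the value at `a` of the square of `s` for the
convolution of functions on `Fˣ`.

Let `e k` and `p k` be the elementary symmetric functions and power sums of the conjugates
`ω(x) ^ 2 ^ i`, `i < n`, so that `e 1 = T̂` and `e 2 = Q̂`. Expanding products, `e k` and `p 3` are
sums of Teichmüller characters whose exponents have `k`, respectively two, binary digits equal
to `1`. By orthogonality of characters, `e j * e k` is `0` for `j ≠ k` and `(q - 1) • e k` for
`j = k`, when `j, k < n`, and `p 3` is orthogonal to `e 0` and `e 1`.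

As `T̂` reduces to the trace modulo `2`, `s ≡ 1 - 2 T̂ ^ 4 (mod 16)`, which Newton's identities turn
into `s ≡ e 0 + 6 e 1 + 4 e 2 + 8 (e 3 + p 3) (mod 16)`. In the convolution square of `s` the
unknown multiple `16 c` then contributes modulo `64` only through `32 (e 0 * c)`, and this is
controlled by `e 0 * s = -e 0`, which expresses that the values of `s` on `F` sum to zero.
-/

open Finset WittVector

section GroupAlgebra

variable {G R : Type*} [CommRing R]

/-- The function `f : G → R` as the element `∑ g, f g • g` of the group algebra, so that
multiplication becomes the convolution of functions. -/
noncomputable def toGroupAlgebra [Finite G] : (G → R) ≃ₗ[R] MonoidAlgebra R G :=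
  (Finsupp.linearEquivFunOnFinite R R G).symm.trans (MonoidAlgebra.coeffLinearEquiv R).symm

theorem coeff_toGroupAlgebra [Finite G] (f : G → R) (g : G) :
    (toGroupAlgebra f).coeff g = f g :=
  rfl

theorem coeff_ofNat_mul [Monoid G] (m : ℕ) [m.AtLeastTwo] (v : MonoidAlgebra R G) (g : G) :
    (ofNat(m) * v).coeff g = ofNat(m) * v.coeff g := by
  simpa only [nsmul_eq_mul, Nat.cast_ofNat, Finsupp.smul_apply] using
    congr($(MonoidAlgebra.coeff_smul (ofNat(m) : ℕ) v) g)

variable [CommGroup G]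

theorem coeff_toGroupAlgebra_mul [Fintype G] (f h : G → R) (g : G) :
    (toGroupAlgebra f * toGroupAlgebra h).coeff g = ∑ x, f (g * x⁻¹) * h x := by
  classical
  rw [MonoidAlgebra.coeff_mul_antidiag _ _ g (univ.image fun x ↦ (g * x⁻¹, x)) (by
      simp [Prod.ext_iff, eq_comm, eq_mul_inv_iff_mul_eq]),
    sum_image fun x _ y _ h ↦ (Prod.ext_iff.1 h).2]
  simp only [coeff_toGroupAlgebra]

theorem toGroupAlgebra_monoidHom_mul [Fintype G] (χ : G →* R) (f : G → R) :
    toGroupAlgebra χ * toGroupAlgebra f = (∑ g, χ g⁻¹ * f g) • toGroupAlgebra χ := by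
  ext g
  simp only [coeff_toGroupAlgebra_mul, MonoidAlgebra.coeff_smul, Finsupp.smul_apply,
    coeff_toGroupAlgebra, map_mul, smul_eq_mul, sum_mul]
  exact sum_congr rfl fun x _ ↦ by ring

variable [Finite G]

theorem toGroupAlgebra_monoidHom_mul_self (χ : G →* R) :
    toGroupAlgebra χ * toGroupAlgebra χ = Nat.card G • toGroupAlgebra χ := by
  have := Fintype.ofFinite G
  simp [toGroupAlgebra_monoidHom_mul, ← map_mul, -nsmul_eq_mul, Nat.cast_smul_eq_nsmul]

theorem toGroupAlgebra_monoidHom_mul_of_ne [IsDomain R] {χ ψ : G →* R} (h : χ ≠ ψ) :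
    toGroupAlgebra χ * toGroupAlgebra ψ = 0 := by
  have := Fintype.ofFinite G
  have hne : χ.comp invMonoidHom * ψ ≠ 1 := by
    refine fun h1 ↦ h (MonoidHom.ext fun g ↦ ?_)
    have hg : χ g⁻¹ * ψ g = 1 := DFunLike.congr_fun h1 g
    simpa [← mul_assoc, ← map_mul] using congr(χ g * $hg.symm)
  have hsum : ∑ g, χ g⁻¹ * ψ g = 0 := sum_hom_units_eq_zero (χ.comp invMonoidHom * ψ) hne
  rw [toGroupAlgebra_monoidHom_mul, hsum, zero_smul]

end GroupAlgebra

section SymmetricFunctions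

theorem sq_sum_range_eq_add_two_mul_sum_Ioo {R : Type*} [CommRing R] (f : ℕ → R) (n : ℕ) :
    (∑ i ∈ range n, f i) ^ 2 =
      ∑ i ∈ range n, f i ^ 2 + 2 * ∑ i ∈ range n, ∑ j ∈ Ioo i n, f i * f j := by
  have hswap : ∑ i ∈ range n, ∑ j ∈ Ioo i n, f i * f j = ∑ j ∈ range n, ∑ i ∈ range j, f i * f j :=
    sum_comm' (by simp; omega)
  rw [hswap]
  clear hswap
  induction n with
  | zero => simp
  | succ n ih =>
    simp only [sum_range_succ, add_sq, ih, ← sum_mul]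
    ring

variable (σ R : Type*) [Fintype σ] [CommRing R]

theorem two_mul_esymm_two :
    2 * MvPolynomial.esymm σ R 2 =
      MvPolynomial.esymm σ R 1 * MvPolynomial.psum σ R 1 - MvPolynomial.psum σ R 2 := by
  have h := MvPolynomial.mul_esymm_eq_sum σ R 2
  rw [show {a ∈ antidiagonal 2 | a.1 < 2} = {(0, 2), (1, 1)} by decide,
    sum_insert (by decide), sum_singleton, MvPolynomial.esymm_zero] at h
  push_cast at h
  linear_combination h

theorem three_mul_esymm_three :
    3 * MvPolynomial.esymm σ R 3 =
      MvPolynomial.esymm σ R 2 * MvPolynomial.psum σ R 1 -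
        MvPolynomial.esymm σ R 1 * MvPolynomial.psum σ R 2 + MvPolynomial.psum σ R 3 := by
  have h := MvPolynomial.mul_esymm_eq_sum σ R 3
  rw [show {a ∈ antidiagonal 3 | a.1 < 3} = {(0, 3), (1, 2), (2, 1)} by decide,
    sum_insert (by decide), sum_insert (by decide), sum_singleton, MvPolynomial.esymm_zero] at h
  push_cast at h
  linear_combination h

end SymmetricFunctions

section WittVector

variable {p : ℕ} [Fact p.Prime] {k : Type*} [Field k] [CharP k p]

theorem isUnit_of_prime_dvd_sub_one {u : WittVector p k} (h : (p : WittVector p k) ∣ u - 1) :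
    IsUnit u := by
  obtain ⟨v, hv⟩ := h
  apply isUnit_of_coeff_zero_ne_zero
  rw [sub_eq_iff_eq_add.1 hv, ← constantCoeff_apply, map_add, map_mul, map_natCast, map_one,
    CharP.cast_eq_zero, zero_mul, zero_add]
  exact one_ne_zero

variable [PerfectRing k p]

theorem prime_dvd_iff_coeff_zero (z : WittVector p k) :
    (p : WittVector p k) ∣ z ↔ z.coeff 0 = 0 := by
  rw [← mem_span_p_iff_coeff_zero_eq_zero, Ideal.mem_span_singleton]

theorem prime_dvd_pow_sub_of_frobenius_eq {z : WittVector p k} (h : WittVector.frobenius z = z) :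
    (p : WittVector p k) ∣ z ^ p - z := by
  have h0 : z.coeff 0 ^ p = z.coeff 0 := by rw [← coeff_frobenius_charP, h]
  rw [prime_dvd_iff_coeff_zero, ← constantCoeff_apply, map_sub, map_pow, constantCoeff_apply, h0,
    sub_self]

end WittVector

section Conjugates

open MvPolynomial (aeval esymm psum)

variable (p n : ℕ) [Fact p.Prime] {F : Type*} [Field F]

/-- The conjugates `ω(x ^ p ^ i)`, `i < n`, of the Teichmüller lift `ω(x)` of an element `x` of the
field with `p ^ n` elements. -/
noncomputable def teichmullerConj (x : F) (i : Fin n) : WittVector p F :=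
  teichmuller p (x ^ p ^ (i : ℕ))

/-- The `k`-th elementary symmetric function of the conjugates of `ω(x)`: the lifted trace `T̂(x)`
for `k = 1` and the lifted quadratic trace `Q̂(x)` for `k = 2`. -/
noncomputable def liftedESymm (k : ℕ) (x : F) : WittVector p F :=
  aeval (teichmullerConj p n x) (esymm (Fin n) ℤ k)

/-- The `k`-th power sum of the conjugates of `ω(x)`. -/
noncomputable def liftedPSum (k : ℕ) (x : F) : WittVector p F :=
  aeval (teichmullerConj p n x) (psum (Fin n) ℤ k)

variable {p n}

theorem liftedESymm_eq_sum_prod (k : ℕ) (x : F) :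
    liftedESymm p n k x = ∑ s ∈ powersetCard k univ, ∏ i ∈ s, teichmullerConj p n x i := by
  simp [liftedESymm, esymm]

theorem liftedPSum_eq_sum_pow (k : ℕ) (x : F) :
    liftedPSum p n k x = ∑ i, teichmullerConj p n x i ^ k := by
  simp [liftedPSum, psum]

theorem liftedESymm_zero (x : F) : liftedESymm p n 0 x = 1 := by simp [liftedESymm]

theorem liftedESymm_apply_zero {k : ℕ} (hk : k ≠ 0) : liftedESymm p n k (0 : F) = 0 := by
  rw [liftedESymm_eq_sum_prod]
  refine sum_eq_zero fun s hs ↦ ?_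
  obtain ⟨i, hi⟩ := card_ne_zero.1 ((mem_powersetCard.1 hs).2 ▸ hk)
  exact prod_eq_zero hi (by simp [teichmullerConj, (Fact.out : p.Prime).ne_zero])

theorem liftedPSum_one (x : F) : liftedPSum p n 1 x = liftedESymm p n 1 x := by
  simp [liftedPSum, liftedESymm, MvPolynomial.esymm_one, MvPolynomial.psum_one]

theorem liftedESymm_one_eq_sum_range (x : F) :
    liftedESymm p n 1 x = ∑ i ∈ range n, teichmuller p (x ^ p ^ i) := by
  rw [← liftedPSum_one, liftedPSum_eq_sum_pow, ← Fin.sum_univ_eq_sum_range]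
  simp [teichmullerConj]

theorem two_mul_liftedESymm_two (x : F) :
    2 * liftedESymm p n 2 x =
      liftedESymm p n 1 x * liftedPSum p n 1 x - liftedPSum p n 2 x := by
  simpa [liftedESymm, liftedPSum] using
    congrArg (aeval (teichmullerConj p n x)) (two_mul_esymm_two (Fin n) ℤ)

theorem three_mul_liftedESymm_three (x : F) :
    3 * liftedESymm p n 3 x = liftedESymm p n 2 x * liftedPSum p n 1 x -
      liftedESymm p n 1 x * liftedPSum p n 2 x + liftedPSum p n 3 x := by
  simpa [liftedESymm, liftedPSum] using
    congrArg (aeval (teichmullerConj p n x)) (three_mul_esymm_three (Fin n) ℤ)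

variable [Fintype F]

theorem teichmullerConj_pow_eq_finRotate (hcard : Fintype.card F = p ^ n) (x : F) (i : Fin n) :
    teichmullerConj p n x i ^ p = teichmullerConj p n x (finRotate n i) := by
  obtain _ | m := n
  · exact i.elim0
  simp only [teichmullerConj, ← map_pow, ← pow_mul, ← pow_succ]
  induction i using Fin.lastCases with
  | last => simp [← hcard, FiniteField.pow_card]
  | cast i => simp [finRotate_apply]

theorem liftedPSum_prime (hcard : Fintype.card F = p ^ n) (x : F) :
    liftedPSum p n p x = liftedESymm p n 1 x := by
  rw [← liftedPSum_one, liftedPSum_eq_sum_pow, liftedPSum_eq_sum_pow]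
  simp_rw [teichmullerConj_pow_eq_finRotate hcard, pow_one]
  exact Equiv.sum_comp (finRotate n) _

variable [CharP F p]

theorem frobenius_liftedESymm (hcard : Fintype.card F = p ^ n) (k : ℕ) (x : F) :
    WittVector.frobenius (liftedESymm p n k x) = liftedESymm p n k x := by
  have hconj : WittVector.frobenius ∘ teichmullerConj p n x =
      teichmullerConj p n x ∘ finRotate n := by
    ext1 i
    rw [Function.comp_apply, Function.comp_apply, ← teichmullerConj_pow_eq_finRotate hcard,
      frobenius_eq_map_frobenius, teichmullerConj, map_teichmuller, ← map_pow]
    rfl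
  conv_rhs =>
    rw [liftedESymm, ← MvPolynomial.esymm_isSymmetric (Fin n) ℤ k (finRotate n),
      MvPolynomial.aeval_rename, ← hconj]
  simp [liftedESymm, esymm]

theorem prime_dvd_liftedESymm_one_sub_trace [Algebra (ZMod p) F]
    (hcard : Fintype.card F = p ^ n) (x : F) :
    (p : WittVector p F) ∣
      liftedESymm p n 1 x - ((Algebra.trace (ZMod p) F x).val : WittVector p F) := by
  have hrank : Module.finrank (ZMod p) F = n := by
    have h := Module.card_eq_pow_finrank (K := ZMod p) (V := F)
    rw [hcard, ZMod.card] at h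
    exact (Nat.pow_right_injective (Fact.out : p.Prime).two_le h).symm
  have htrace := FiniteField.algebraMap_trace_eq_sum_pow (ZMod p) F x
  rw [hrank, Nat.card_zmod] at htrace
  rw [prime_dvd_iff_coeff_zero, ← constantCoeff_apply, map_sub, sub_eq_zero, map_natCast,
    liftedESymm_one_eq_sum_range, map_sum]
  simp only [constantCoeff_apply, teichmuller_coeff_zero, ← htrace]
  rw [← map_natCast (algebraMap (ZMod p) F), ZMod.natCast_zmod_val]

end Conjugates

section DigitCharacters

theorem sum_pow_lt_pow_sub_one {b n : ℕ} (hb : 2 ≤ b) {s : Finset (Fin n)} (hs : s ≠ univ) :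
    ∑ i ∈ s, b ^ (i : ℕ) < b ^ n - 1 := by
  obtain ⟨j, hj⟩ : ∃ j, j ∉ s := by simpa [eq_univ_iff_forall] using hs
  have hlt := Nat.geomSum_lt (n := n) (s := (insert j s).map Fin.valEmbedding) hb (by simp)
  rw [sum_map, sum_insert hj] at hlt
  simp only [Fin.valEmbedding_apply] at hlt
  have hpos : 0 < b ^ (j : ℕ) := by positivity
  omega

theorem self_ne_finRotate {n : ℕ} (hn : 2 ≤ n) (i : Fin n) : i ≠ finRotate n i := by
  obtain ⟨m, rfl⟩ := Nat.exists_eq_add_of_le' hn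
  exact (Equiv.Perm.mem_support.1 (by simp [support_finRotate])).symm

variable (p : ℕ) {n : ℕ} [Fact p.Prime] (F : Type*) [Field F]

/-- The power of the Teichmüller character whose exponent has the base `p` digits `1` at the
positions in `s` and `0` elsewhere. -/
noncomputable def digitChar (s : Finset (Fin n)) : Fˣ →* WittVector p F :=
  ((teichmuller p).comp (Units.coeHom F)) ^ ∑ i ∈ s, p ^ (i : ℕ)

variable {p F}

theorem digitChar_apply (s : Finset (Fin n)) (y : Fˣ) :
    digitChar p F s y = ∏ i ∈ s, teichmullerConj p n (y : F) i := by
  simp [digitChar, teichmullerConj, prod_pow_eq_pow_sum]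

variable [Fintype F]

theorem digitChar_injOn (hcard : Fintype.card F = p ^ n) :
    Set.InjOn (digitChar p F) {s : Finset (Fin n) | s ≠ univ} := by
  intro s hs t ht hst
  have hp : 2 ≤ p := (Fact.out : p.Prime).two_le
  obtain ⟨g, hg⟩ := IsCyclic.exists_generator (α := Fˣ)
  have horder : orderOf g = p ^ n - 1 := by
    rw [orderOf_eq_card_of_forall_mem_zpowers hg, Nat.card_units, Nat.card_eq_fintype_card, hcard]
  have hpow : g ^ ∑ i ∈ s, p ^ (i : ℕ) = g ^ ∑ i ∈ t, p ^ (i : ℕ) := by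
    have h := congrArg (fun w ↦ w.coeff 0) (DFunLike.congr_fun hst g)
    simp only [digitChar, MonoidHom.pow_apply, MonoidHom.comp_apply, Units.coeHom_apply,
      ← map_pow, teichmuller_coeff_zero] at h
    exact_mod_cast h
  have hsum := pow_injOn_Iio_orderOf
    (by simpa [horder] using sum_pow_lt_pow_sub_one hp hs)
    (by simpa [horder] using sum_pow_lt_pow_sub_one hp ht) hpow
  refine map_injective Fin.valEmbedding (geomSum_injective hp ?_)
  simpa using hsum

theorem toGroupAlgebra_digitChar_mul_of_ne [CharP F p] (hcard : Fintype.card F = p ^ n)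
    {s t : Finset (Fin n)} (hs : #s < n) (ht : #t < n) (hst : s ≠ t) :
    toGroupAlgebra (digitChar p F s) * toGroupAlgebra (digitChar p F t) = 0 := by
  refine toGroupAlgebra_monoidHom_mul_of_ne fun h ↦ hst (digitChar_injOn hcard ?_ ?_ h) <;>
  · rintro rfl
    simp at *

variable (p n F)

/-- The function `liftedESymm p n k` on `Fˣ` as an element of the convolution algebra. -/
noncomputable def convESymm (k : ℕ) : MonoidAlgebra (WittVector p F) Fˣ :=
  toGroupAlgebra fun y ↦ liftedESymm p n k (y : F)

/-- The function `liftedPSum p n k` on `Fˣ` as an element of the convolution algebra. -/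
noncomputable def convPSum (k : ℕ) : MonoidAlgebra (WittVector p F) Fˣ :=
  toGroupAlgebra fun y ↦ liftedPSum p n k (y : F)

variable {p n F}

theorem convESymm_eq_sum_digitChar (k : ℕ) :
    convESymm p n F k =
      ∑ s ∈ powersetCard k (univ : Finset (Fin n)), toGroupAlgebra (digitChar p F s) := by
  rw [convESymm, ← map_sum]
  congr 1
  ext1 y
  simp [liftedESymm_eq_sum_prod, digitChar_apply]

theorem convPSum_prime_add_one_eq_sum_digitChar (hcard : Fintype.card F = p ^ n) (hn : 2 ≤ n) :
    convPSum p n F (p + 1) = ∑ i, toGroupAlgebra (digitChar p F {i, finRotate n i}) := by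
  rw [convPSum, ← map_sum]
  congr 1
  ext1 y
  rw [liftedPSum_eq_sum_pow, Finset.sum_apply]
  refine sum_congr rfl fun i _ ↦ ?_
  rw [digitChar_apply, prod_pair (self_ne_finRotate hn i), pow_succ',
    teichmullerConj_pow_eq_finRotate hcard]

variable [CharP F p]

theorem convESymm_mul_convESymm_of_ne (hcard : Fintype.card F = p ^ n) {j k : ℕ}
    (hj : j < n) (hk : k < n) (hjk : j ≠ k) : convESymm p n F j * convESymm p n F k = 0 := by
  simp only [convESymm_eq_sum_digitChar, sum_mul_sum]
  refine sum_eq_zero fun s hs ↦ sum_eq_zero fun t ht ↦ ?_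
  obtain ⟨-, rfl⟩ := mem_powersetCard.1 hs
  obtain ⟨-, rfl⟩ := mem_powersetCard.1 ht
  exact toGroupAlgebra_digitChar_mul_of_ne hcard hj hk fun h ↦ hjk (h ▸ rfl)

theorem convESymm_mul_self (hcard : Fintype.card F = p ^ n) {k : ℕ} (hk : k < n) :
    convESymm p n F k * convESymm p n F k = (p ^ n - 1) * convESymm p n F k := by
  have hunits : (Nat.card Fˣ : MonoidAlgebra (WittVector p F) Fˣ) = p ^ n - 1 := by
    rw [Nat.card_units, Nat.card_eq_fintype_card, hcard,
      Nat.cast_pred (pow_pos (Fact.out : p.Prime).pos n), Nat.cast_pow]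
  simp only [convESymm_eq_sum_digitChar, sum_mul_sum]
  rw [mul_sum]
  refine sum_congr rfl fun s hs ↦ ?_
  rw [sum_eq_single_of_mem s hs, toGroupAlgebra_monoidHom_mul_self, nsmul_eq_mul, hunits]
  intro t ht hts
  obtain ⟨-, rfl⟩ := mem_powersetCard.1 hs
  exact toGroupAlgebra_digitChar_mul_of_ne hcard hk ((mem_powersetCard.1 ht).2.trans_lt hk) hts.symm

theorem convESymm_mul_convPSum_prime_add_one (hcard : Fintype.card F = p ^ n) (hn : 2 < n) {k : ℕ}
    (hk : k < n) (hk2 : k ≠ 2) : convESymm p n F k * convPSum p n F (p + 1) = 0 := by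
  rw [convPSum_prime_add_one_eq_sum_digitChar hcard hn.le, convESymm_eq_sum_digitChar, sum_mul_sum]
  refine sum_eq_zero fun s hs ↦ sum_eq_zero fun i _ ↦ ?_
  obtain ⟨-, rfl⟩ := mem_powersetCard.1 hs
  have hpair := card_pair (self_ne_finRotate hn.le i)
  exact toGroupAlgebra_digitChar_mul_of_ne hcard hk (hpair ▸ hn) fun h ↦ hk2 (h ▸ hpair)

end DigitCharacters

section TraceSign

variable {F : Type*} [Field F] [Algebra (ZMod 2) F]

variable (F) in
/-- The canonical additive character `x ↦ (-1) ^ Tr(x)`. -/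
noncomputable def traceSign : AddChar F ℤ :=
  (AddChar.zmodChar 2 neg_one_sq).compAddMonoidHom (Algebra.trace (ZMod 2) F).toAddMonoidHom

theorem traceSign_apply (x : F) : traceSign F x = (-1) ^ (Algebra.trace (ZMod 2) F x).val := rfl

theorem sum_traceSign [Fintype F] : ∑ x, traceSign F x = 0 := by
  refine AddChar.sum_eq_zero_of_ne_one fun h ↦ ?_
  obtain ⟨b, hb⟩ := Algebra.trace_surjective (ZMod 2) F 1
  have h1 := DFunLike.congr_fun h b
  rw [traceSign_apply, hb, AddChar.one_apply] at h1
  exact absurd h1 (by decide)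

end TraceSign

section LiftedTraces

variable {n : ℕ} {F : Type*} [Field F]

theorem liftedESymm_two_eq_sum_Ioo [CharP F 2] (x : F) :
    liftedESymm 2 n 2 x = ∑ i ∈ range n, ∑ j ∈ Ioo i n, teichmuller 2 (x ^ (2 ^ i + 2 ^ j)) := by
  refine mul_left_cancel₀ (by simpa using p_nonzero 2 F : (2 : WittVector 2 F) ≠ 0) ?_
  rw [two_mul_liftedESymm_two, liftedPSum_one, ← sq, liftedESymm_one_eq_sum_range,
    sq_sum_range_eq_add_two_mul_sum_Ioo, liftedPSum_eq_sum_pow]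
  simp [teichmullerConj, pow_add, Fin.sum_univ_eq_sum_range (fun i ↦ (teichmuller 2 x ^ 2 ^ i) ^ 2)]

variable [Fintype F]

theorem liftedESymm_one_sq (hcard : Fintype.card F = 2 ^ n) (x : F) :
    liftedESymm 2 n 1 x ^ 2 = liftedESymm 2 n 1 x + 2 * liftedESymm 2 n 2 x := by
  rw [two_mul_liftedESymm_two, liftedPSum_one, liftedPSum_prime hcard]
  ring

theorem liftedESymm_one_mul_two (hcard : Fintype.card F = 2 ^ n) (x : F) :
    liftedESymm 2 n 1 x * liftedESymm 2 n 2 x = 3 * liftedESymm 2 n 3 x + liftedESymm 2 n 1 x +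
      2 * liftedESymm 2 n 2 x - liftedPSum 2 n 3 x := by
  rw [three_mul_liftedESymm_three, liftedPSum_one, liftedPSum_prime hcard]
  linear_combination liftedESymm_one_sq hcard x

variable [CharP F 2]

theorem exists_liftedESymm_one_pow_four_eq (hcard : Fintype.card F = 2 ^ n) (x : F) :
    ∃ c, liftedESymm 2 n 1 x ^ 4 = 5 * liftedESymm 2 n 1 x + 6 * liftedESymm 2 n 2 x +
      4 * (liftedESymm 2 n 3 x + liftedPSum 2 n 3 x) + 8 * c := by
  obtain ⟨d, hd⟩ := prime_dvd_pow_sub_of_frobenius_eq (frobenius_liftedESymm hcard 2 x)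
  push_cast at hd
  have hmul := liftedESymm_one_mul_two hcard x
  have hsq := liftedESymm_one_sq hcard x
  set t := liftedESymm 2 n 1 x
  set q := liftedESymm 2 n 2 x
  refine ⟨q + liftedESymm 2 n 3 x - liftedPSum 2 n 3 x + d, ?_⟩
  calc t ^ 4 = t + 2 * q + 4 * (t * q) + 4 * q ^ 2 := by
        linear_combination (t ^ 2 + t + 2 * q + 1) * hsq
    _ = _ := by linear_combination 4 * hmul + 4 * hd

variable [Algebra (ZMod 2) F]

theorem exists_traceSign_eq_sub_pow_four (hcard : Fintype.card F = 2 ^ n) (x : F) :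
    ∃ c, (traceSign F x : WittVector 2 F) = 1 - 2 * liftedESymm 2 n 1 x ^ 4 + 16 * c := by
  obtain ⟨z, hz⟩ := prime_dvd_liftedESymm_one_sub_trace hcard x
  rw [traceSign_apply, sub_eq_iff_eq_add.1 hz]
  generalize Algebra.trace (ZMod 2) F x = v
  obtain rfl | rfl : v = 0 ∨ v = 1 := by decide +revert
  · refine ⟨2 * z ^ 4, ?_⟩
    rw [ZMod.val_zero]
    push_cast
    ring
  · refine ⟨z + 3 * z ^ 2 + 4 * z ^ 3 + 2 * z ^ 4, ?_⟩
    rw [ZMod.val_one]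
    push_cast
    ring

theorem exists_traceSign_eq (hcard : Fintype.card F = 2 ^ n) (x : F) :
    ∃ c, (traceSign F x : WittVector 2 F) = 1 + 6 * liftedESymm 2 n 1 x +
      4 * liftedESymm 2 n 2 x + 8 * (liftedESymm 2 n 3 x + liftedPSum 2 n 3 x) + 16 * c := by
  obtain ⟨c, hc⟩ := exists_liftedESymm_one_pow_four_eq hcard x
  obtain ⟨d, hd⟩ := exists_traceSign_eq_sub_pow_four hcard x
  refine ⟨d - c - liftedESymm 2 n 1 x - liftedESymm 2 n 2 x -
    (liftedESymm 2 n 3 x + liftedPSum 2 n 3 x), ?_⟩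
  linear_combination hd - 2 * hc

end LiftedTraces

section Kloosterman

theorem sixtyfour_dvd_mul_self_add {A : Type*} [CommRing A] {u t q b c s m : A}
    (hs : s = u + 6 * t + 4 * q + 8 * b + 16 * c) (hus : u * s = -u)
    (huu : u * u = (64 * m - 1) * u) (htt : t * t = (64 * m - 1) * t)
    (hqq : q * q = (64 * m - 1) * q) (hut : u * t = 0) (huq : u * q = 0) (hub : u * b = 0)
    (htq : t * q = 0) (htb : t * b = 0) : 64 ∣ s * s + u + 36 * t + 16 * q := by
  have huc : 16 * (u * c) = -(64 * m * u) := by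
    linear_combination hus - u * hs - huu - 6 * hut - 4 * huq - 8 * hub
  refine ⟨m * (36 * t + 16 * q - u) + q * b + 3 * t * c + 2 * q * c + b ^ 2 + 4 * b * c + 4 * c ^ 2,
    ?_⟩
  linear_combination (s + u + 6 * t + 4 * q + 8 * b + 16 * c) * hs + huu + 36 * htt + 16 * hqq +
    12 * hut + 8 * huq + 16 * hub + 48 * htq + 96 * htb + 2 * huc

variable {F : Type*} [Field F] [Fintype F]

theorem pow_card_sub_two_eq_inv (h : 2 < Fintype.card F) (x : F) :
    x ^ (Fintype.card F - 2) = x⁻¹ := by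
  obtain rfl | hx := eq_or_ne x 0
  · rw [inv_zero, zero_pow (by omega)]
  · refine eq_inv_of_mul_eq_one_left ?_
    rw [← pow_succ, show Fintype.card F - 2 + 1 = Fintype.card F - 1 by omega,
      FiniteField.pow_card_sub_one_eq_one x hx]

theorem sum_eq_add_sum_units [DecidableEq F] {M : Type*} [AddCommMonoid M] (f : F → M) :
    ∑ x, f x = f 0 + ∑ y : Fˣ, f y := by
  rw [Fintype.sum_eq_add_sum_subtype_ne f 0, ← unitsEquivNeZero.sum_comp]
  rfl

variable [Algebra (ZMod 2) F]

/-- The Kloosterman sum `K(a)`, with `x⁻¹` for `x ^ (q - 2)`; in particular `0⁻¹ = 0`. -/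
noncomputable def kloostermanSum (a : F) : ℤ := ∑ x : F, traceSign F (x⁻¹ + a * x)

theorem kloostermanSum_zero : kloostermanSum (0 : F) = 0 := by
  simp only [kloostermanSum, zero_mul, add_zero]
  exact (Equiv.sum_comp (Equiv.inv F) _).trans sum_traceSign

variable (F) in
/-- The function `traceSign F` on `Fˣ` as an element of the convolution algebra. -/
noncomputable def convTraceSign : MonoidAlgebra (WittVector 2 F) Fˣ :=
  toGroupAlgebra fun y ↦ (traceSign F (y : F) : WittVector 2 F)

theorem kloostermanSum_units (a : Fˣ) :
    (kloostermanSum (a : F) : WittVector 2 F) =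
      1 + (convTraceSign F * convTraceSign F).coeff a := by
  classical
  rw [kloostermanSum, sum_eq_add_sum_units, convTraceSign, coeff_toGroupAlgebra_mul,
    ← Equiv.sum_comp (Equiv.inv Fˣ)]
  simp [AddChar.map_add_eq_mul, mul_comm]

variable {n : ℕ}

theorem convESymm_zero_mul_convTraceSign :
    convESymm 2 n F 0 * convTraceSign F = -convESymm 2 n F 0 := by
  classical
  have hsum : ∑ y : Fˣ, (traceSign F (y : F) : WittVector 2 F) = -1 := by
    have h := sum_traceSign (F := F)
    rw [sum_eq_add_sum_units, AddChar.map_zero_eq_one, add_comm] at h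
    rw [← Int.cast_sum, eq_neg_of_add_eq_zero_left h, Int.cast_neg, Int.cast_one]
  have hone : convESymm 2 n F 0 = toGroupAlgebra (1 : Fˣ →* WittVector 2 F) := by
    simp [convESymm_eq_sum_digitChar, digitChar]
  rw [hone, convTraceSign, toGroupAlgebra_monoidHom_mul]
  simp [hsum]

variable [CharP F 2]

theorem exists_convTraceSign_eq (hcard : Fintype.card F = 2 ^ n) :
    ∃ c, convTraceSign F = convESymm 2 n F 0 + 6 * convESymm 2 n F 1 + 4 * convESymm 2 n F 2 +
      8 * (convESymm 2 n F 3 + convPSum 2 n F 3) + 16 * c := by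
  choose c hc using fun y : Fˣ ↦ exists_traceSign_eq hcard (y : F)
  refine ⟨toGroupAlgebra c, ?_⟩
  ext y
  simp [convTraceSign, convESymm, convPSum, coeff_ofNat_mul, coeff_toGroupAlgebra,
    liftedESymm_zero, hc]

theorem sixtyfour_dvd_convTraceSign_mul_self_add (hn : 6 ≤ n) (hcard : Fintype.card F = 2 ^ n) :
    64 ∣ convTraceSign F * convTraceSign F + convESymm 2 n F 0 + 36 * convESymm 2 n F 1 +
      16 * convESymm 2 n F 2 := by
  obtain ⟨c, hc⟩ := exists_convTraceSign_eq hcard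
  obtain ⟨m, hm⟩ : (64 : MonoidAlgebra (WittVector 2 F) Fˣ) ∣ (2 : ℕ) ^ n := by
    convert pow_dvd_pow _ hn using 1
    norm_num
  have hself {k : ℕ} (hk : k < 6) := hm ▸ convESymm_mul_self (F := F) hcard (hk.trans_le hn)
  have hne {j k : ℕ} (hj : j < 6) (hk : k < 6) :=
    convESymm_mul_convESymm_of_ne (F := F) hcard (hj.trans_le hn) (hk.trans_le hn)
  have hthree {k : ℕ} (hk : k < 2) :
      convESymm 2 n F k * (convESymm 2 n F 3 + convPSum 2 n F 3) = 0 := by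
    rw [mul_add, hne (by omega) (by omega) (by omega),
      convESymm_mul_convPSum_prime_add_one hcard (by omega) (by omega) hk.ne, add_zero]
  exact sixtyfour_dvd_mul_self_add hc convESymm_zero_mul_convTraceSign
    (hself (by decide)) (hself (by decide)) (hself (by decide))
    (hne (by decide) (by decide) (by decide)) (hne (by decide) (by decide) (by decide))
    (hthree (by decide)) (hne (by decide) (by decide) (by decide)) (hthree (by decide))

theorem sixtyfour_dvd_kloostermanSum_sub (hn : 6 ≤ n) (hcard : Fintype.card F = 2 ^ n) (a : F) :
    (64 : WittVector 2 F) ∣ (kloostermanSum a : WittVector 2 F) -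
      (-36 * liftedESymm 2 n 1 a - 16 * liftedESymm 2 n 2 a) := by
  obtain rfl | ha := eq_or_ne a 0
  · simp [kloostermanSum_zero, liftedESymm_apply_zero]
  lift a to Fˣ using IsUnit.mk0 a ha
  obtain ⟨e, he⟩ := sixtyfour_dvd_convTraceSign_mul_self_add hn hcard
  refine ⟨e.coeff a, ?_⟩
  have h := congr(MonoidAlgebra.coeff $he a)
  simp only [MonoidAlgebra.coeff_add, Finsupp.add_apply, coeff_ofNat_mul, convESymm,
    coeff_toGroupAlgebra, liftedESymm_zero] at h
  rw [kloostermanSum_units]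
  linear_combination h

end Kloosterman

theorem sixtyfour_dvd_sub_iff {F : Type*} [Field F] [CharP F 2] {K T Q c d : WittVector 2 F}
    (hK : 64 ∣ K - (-36 * T - 16 * Q)) (hQ : 2 * Q = T ^ 2 - T)
    (hd : 64 ∣ d - (-28 * c - 8 * c ^ 2)) : 64 ∣ K - d ↔ 16 ∣ T - c := by
  have hunit : IsUnit (7 + 2 * (T + c)) :=
    isUnit_of_prime_dvd_sub_one ⟨3 + T + c, by push_cast; ring⟩
  have hfour : (4 : WittVector 2 F) ≠ 0 := by
    simpa [show (2 : WittVector 2 F) ^ 2 = 4 by norm_num] using pow_ne_zero 2 (p_nonzero 2 F)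
  have hfactor : K - d = (K - (-36 * T - 16 * Q)) - (d - (-28 * c - 8 * c ^ 2)) -
      4 * ((T - c) * (7 + 2 * (T + c))) := by linear_combination -8 * hQ
  rw [hfactor, dvd_sub_right (dvd_sub hK hd), show (64 : WittVector 2 F) = 4 * 16 by norm_num,
    mul_dvd_mul_iff_left hfour, hunit.dvd_mul_right]

/-- For `n ≥ 6`, `q = 2^n`, `a ∈ F_q`: in the ring of integers `𝕎(F_q)` of `ℚ₂(ξ)`,
`K(a) ≡ -36·T̂(a) - 16·Q̂(a) (mod 64)` where `T̂` is the lifted trace and `Q̂` the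
lifted quadratic trace (with `2Q̂(a) = T̂(a)² - T̂(a)`); in particular
`K(a) ≡ 0 (mod 64) ↔ T̂(a) ≡ 0 (mod 16)`, `K(a) ≡ 4 (mod 64) ↔ T̂(a) ≡ 11 (mod 16)`,
and `K(a) ≡ 32 (mod 64) ↔ T̂(a) ≡ 8 (mod 16)`. -/
theorem kloosterman_mod_sixtyfour (n : ℕ) (hn : 6 ≤ n)
    (F : Type*) [Field F] [Fintype F] [CharP F 2] [Algebra (ZMod 2) F]
    (hcard : Fintype.card F = 2 ^ n) (a : F)
    (K : ℤ)
    (hK : K = ∑ x : F, (-1 : ℤ) ^ (Algebra.trace (ZMod 2) F (x ^ (2 ^ n - 2) + a * x)).val)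
    (T Qh : WittVector 2 F)
    (hT : T = ∑ i ∈ Finset.range n, WittVector.teichmuller 2 (a ^ 2 ^ i))
    (hQ : Qh = ∑ i ∈ Finset.range n, ∑ j ∈ Finset.Ioo i n,
              WittVector.teichmuller 2 (a ^ (2 ^ i + 2 ^ j))) :
    (64 : WittVector 2 F) ∣ (K : WittVector 2 F) - (-36 * T - 16 * Qh) ∧
    2 * Qh = T ^ 2 - T ∧
    ((64 : WittVector 2 F) ∣ (K : WittVector 2 F) ↔ (16 : WittVector 2 F) ∣ T) ∧
    ((64 : WittVector 2 F) ∣ (K : WittVector 2 F) - 4 ↔ (16 : WittVector 2 F) ∣ T - 11) ∧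
    ((64 : WittVector 2 F) ∣ (K : WittVector 2 F) - 32 ↔ (16 : WittVector 2 F) ∣ T - 8) := by
  have hT : T = liftedESymm 2 n 1 a := hT.trans (liftedESymm_one_eq_sum_range a).symm
  have hQ : Qh = liftedESymm 2 n 2 a := hQ.trans (liftedESymm_two_eq_sum_Ioo a).symm
  have hq : 2 < Fintype.card F :=
    hcard ▸ Nat.lt_of_lt_of_le (by norm_num) (Nat.pow_le_pow_right two_pos hn)
  have hK : K = kloostermanSum a := by
    simp only [hK, kloostermanSum, ← pow_card_sub_two_eq_inv hq, hcard, traceSign_apply]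
  have hKTQ : (64 : WittVector 2 F) ∣ K - (-36 * T - 16 * Qh) := by
    rw [hK, hT, hQ]
    exact sixtyfour_dvd_kloostermanSum_sub hn hcard a
  have hTQ : 2 * Qh = T ^ 2 - T := by rw [hT, hQ, liftedESymm_one_sq hcard]; ring
  refine ⟨hKTQ, hTQ, ?_, sixtyfour_dvd_sub_iff hKTQ hTQ ⟨20, by norm_num⟩,
    sixtyfour_dvd_sub_iff hKTQ hTQ ⟨12, by norm_num⟩⟩
  simpa using sixtyfour_dvd_sub_iff (d := 0) (c := 0) hKTQ hTQ (by simp)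
end
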